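/- arXiv:2403.03033 — 2 statements merged into one kernel-verified Lean document; each statement's English description precedes it below -/
import Mathlib

section
/- Let d ≥ 1, ℓ ∈ ℝ, let v₁,…,v_n ∈ ℤ^d be distinct and set D := ⋃_{i=1}^n B_{v_i}, equipped with the stratification consisting of all open faces of the cubes B_{v_1},…,B_{v_n}, and let g, p : ℝ^d → ℝ be C² functions. Assume that {g ≥ ℓ} ∩ D and {g + p ≥ ℓ} ∩ D each have at most finitely many connected components, and that none of v₁,…,v_n belongs to the finite-range unstable set U_FR(g,p) at level ℓ. Then there exists a stratified isotopy H of D such that: (1) H({g ≥ ℓ} ∩ D, t) = {g + tp ≥ ℓ} ∩ D for every t ∈ [0,1]; (2) H(·,0) is the identity map on D; (3) H({g ≥ ℓ}_∞ ∩ D, 1) = {g + p ≥ ℓ}_∞ ∩ D. -/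
open MeasureTheory Filter Set Topology Metric
open scoped ENNReal NNReal

noncomputable section

/-- `ℝ^d` as Euclidean space. -/
abbrev Euc (d : ℕ) := EuclideanSpace ℝ (Fin d)

/-- The closed unit cube `B_v = v + [0,1]^d`. -/
def unitCube (d : ℕ) (v : Fin d → ℤ) : Set (Euc d) :=
  {x | ∀ i, (v i : ℝ) ≤ x i ∧ x i ≤ (v i : ℝ) + 1}

/-- The open face of the cube `B_v` described by `s`: `some false ↦ {v i}`,
`some true ↦ {v i + 1}`, `none ↦ (v i, v i + 1)`. -/
def openFace (d : ℕ) (v : Fin d → ℤ) (s : Fin d → Option Bool) : Set (Euc d) :=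
  {x | ∀ i, match s i with
    | some false => x i = (v i : ℝ)
    | some true => x i = (v i : ℝ) + 1
    | none => (v i : ℝ) < x i ∧ x i < (v i : ℝ) + 1}

/-- `x` is a stratified critical point of `h` in the cube `B_v` at level `ℓ`. -/
def IsStratCrit (d : ℕ) (h : Euc d → ℝ) (v : Fin d → ℤ) (ℓ : ℝ) (x : Euc d) : Prop :=
  ∃ s : Fin d → Option Bool, x ∈ openFace d v s ∧ h x = ℓ ∧
    ∀ i, s i = none → fderiv ℝ h x (EuclideanSpace.single i 1) = 0

/-- `(g,p)` is locally topologically stable on `B_v` at level `ℓ`. -/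
def LocStable (d : ℕ) (g p : Euc d → ℝ) (v : Fin d → ℤ) (ℓ : ℝ) : Prop :=
  ∀ t ∈ Set.Icc (0:ℝ) 1, ∀ x : Euc d, ¬ IsStratCrit d (fun y => g y + t * p y) v ℓ x

/-- Union of the unbounded connected components of `A`. -/
def unboundedPart (d : ℕ) (A : Set (Euc d)) : Set (Euc d) :=
  {x | x ∈ A ∧ ¬ Bornology.IsBounded (connectedComponentIn A x)}

/-- Union of the bounded connected components of `A`. -/
def boundedPart (d : ℕ) (A : Set (Euc d)) : Set (Euc d) :=
  A \ unboundedPart d A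

/-- The locally unstable set `U_Loc(g,p)` at level `ℓ`. -/
def ULoc (d : ℕ) (g p : Euc d → ℝ) (ℓ : ℝ) : Set (Fin d → ℤ) :=
  {w | ¬ LocStable d g p w ℓ}

/-- The finite-range unstable set `U_FR(g,p)` at level `ℓ`. -/
def UFR (d : ℕ) (g p : Euc d → ℝ) (ℓ : ℝ) : Set (Fin d → ℤ) :=
  ULoc d g p ℓ ∪
    {w | ∃ u ∈ ULoc d g p ℓ,
      (∃ x ∈ unitCube d w, ∃ y ∈ unitCube d u,
        JoinedIn (boundedPart d {z | ℓ ≤ g z}) x y) ∨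
      (∃ x ∈ unitCube d w, ∃ y ∈ unitCube d u,
        JoinedIn (boundedPart d {z | ℓ ≤ g z + p z}) x y)}

/-- `A` has at most finitely many connected components. -/
def FinitelyManyComponents (d : ℕ) (A : Set (Euc d)) : Prop :=
  {C : Set (Euc d) | ∃ x ∈ A, C = connectedComponentIn A x}.Finite

/-- `H` is a stratified isotopy of the union `D` of the cubes `B_{v i}`:
it is continuous on `D × [0,1]`, each time slice is a homeomorphism of `D`
onto itself, and each stratum (open face) is preserved at every time. -/
def IsStratIsotopy (d n : ℕ) (v : Fin n → Fin d → ℤ) (H : Euc d → ℝ → Euc d) : Prop :=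
  ContinuousOn (fun q : Euc d × ℝ => H q.1 q.2) ((⋃ i, unitCube d (v i)) ×ˢ Set.Icc 0 1) ∧
  (∀ t ∈ Set.Icc (0:ℝ) 1,
    ∃ e : (⋃ i, unitCube d (v i)) ≃ₜ (⋃ i, unitCube d (v i)),
      ∀ x : (⋃ i, unitCube d (v i)), (e x : Euc d) = H x t) ∧
  (∀ t ∈ Set.Icc (0:ℝ) 1, ∀ i : Fin n, ∀ s : Fin d → Option Bool,
    (fun x => H x t) '' openFace d (v i) s = openFace d (v i) s)

/-- The cube `Λ_r = [-r,r]^d`. -/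
def bigCube (d : ℕ) (r : ℝ) : Set (Euc d) :=
  {x | ∀ i, |x i| ≤ r}

/-- A curve whose derivative is bounded by a multiple of its norm vanishes after any zero. -/
theorem eq_zero_right_of_norm_deriv_le {E : Type*} [NormedAddCommGroup E] [NormedSpace ℝ E]
    {f f' : ℝ → E} {a b K s t : ℝ}
    (hf : ∀ r ∈ Icc a b, HasDerivWithinAt f (f' r) (Icc a b) r)
    (hK : ∀ r ∈ Icc a b, ‖f' r‖ ≤ K * ‖f r‖)
    (hs : s ∈ Icc a b) (ht : t ∈ Icc a b) (hst : s ≤ t) (h0 : f s = 0) : f t = 0 := by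
  have hsub : Icc s t ⊆ Icc a b := Icc_subset_Icc hs.1 ht.2
  refine eq_zero_of_abs_deriv_le_mul_abs_self_of_eq_zero_right (f' := f') (K := K)
    (a := s) (b := t) (fun r hr => ((hf r (hsub hr)).continuousWithinAt).mono hsub) ?_ h0
    (fun r hr => hK r (hsub (Ico_subset_Icc_self hr))) t ⟨hst, le_rfl⟩
  intro r hr
  refine ((hf r (hsub (Ico_subset_Icc_self hr))).mono hsub).mono_of_mem_nhdsWithin ?_
  filter_upwards [self_mem_nhdsWithin, mem_nhdsWithin_of_mem_nhds (Iio_mem_nhds hr.2)]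
    with x hx hx'
  exact ⟨hr.1.trans hx, le_of_lt hx'⟩

/-- A curve whose derivative is bounded by a multiple of its norm vanishes identically as soon
as it has a zero. -/
theorem eq_zero_of_norm_deriv_le {E : Type*} [NormedAddCommGroup E] [NormedSpace ℝ E]
    {f f' : ℝ → E} {a b K s t : ℝ}
    (hf : ∀ r ∈ Icc a b, HasDerivWithinAt f (f' r) (Icc a b) r)
    (hK : ∀ r ∈ Icc a b, ‖f' r‖ ≤ K * ‖f r‖)
    (hs : s ∈ Icc a b) (ht : t ∈ Icc a b) (h0 : f s = 0) : f t = 0 := by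
  rcases le_total s t with hst | hst
  · exact eq_zero_right_of_norm_deriv_le hf hK hs ht hst h0
  · have hneg : ∀ r ∈ Icc (-b) (-a), -r ∈ Icc a b := fun r hr =>
      ⟨by linarith [hr.2], by linarith [hr.1]⟩
    have key := eq_zero_right_of_norm_deriv_le (f := fun r => f (-r)) (f' := fun r => -f' (-r))
      (a := -b) (b := -a) (K := K) (s := -s) (t := -t) ?_ ?_ ?_ ?_ (by linarith) (by simpa using h0)
    · simpa using key
    · intro r hr
      have := (hf (-r) (hneg r hr)).scomp r ((hasDerivAt_neg r).hasDerivWithinAt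
        (s := Icc (-b) (-a))) hneg
      simpa [Function.comp_def] using this
    · intro r hr
      simpa using hK (-r) (hneg r hr)
    · exact ⟨by linarith [hs.2], by linarith [hs.1]⟩
    · exact ⟨by linarith [ht.2], by linarith [ht.1]⟩

/-- A real function whose derivative is bounded by a multiple of itself keeps its sign. -/
theorem nonneg_iff_of_abs_deriv_le {f f' : ℝ → ℝ} {a b K s t : ℝ}
    (hf : ∀ r ∈ Icc a b, HasDerivWithinAt f (f' r) (Icc a b) r)
    (hK : ∀ r ∈ Icc a b, |f' r| ≤ K * |f r|)
    (hs : s ∈ Icc a b) (ht : t ∈ Icc a b) : 0 ≤ f s ↔ 0 ≤ f t := by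
  have hc : ContinuousOn f (Icc a b) := fun r hr => (hf r hr).continuousWithinAt
  have key : ∀ s ∈ Icc a b, ∀ t ∈ Icc a b, 0 ≤ f s → 0 ≤ f t := by
    intro s hs t ht h
    by_contra! hneg
    have h0 : (0 : ℝ) ∈ Icc (f t) (f s) := ⟨hneg.le, h⟩
    obtain ⟨r, hr, hr0⟩ := isPreconnected_Icc.intermediate_value ht hs hc h0
    have := eq_zero_of_norm_deriv_le hf hK hr ht hr0
    linarith
  exact ⟨key s hs t ht, key t ht s hs⟩

/-- Picard–Lindelöf data on `[0,1]` for a bounded Lipschitz vector field. -/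
theorem isPicardLindelof_of_bounded_lipschitz {E : Type*} [NormedAddCommGroup E] {V : ℝ × E → E} {K L : ℝ≥0}
    (hV : LipschitzWith K V) (hL : ∀ z, ‖V z‖ ≤ L) (t₀ : Icc (0 : ℝ) 1) (x₀ : E) :
    IsPicardLindelof (fun t x => V (t, x)) t₀ x₀ (1 + L) 1 L K where
  lipschitzOnWith t _ := by
    refine LipschitzWith.lipschitzOnWith (LipschitzWith.of_dist_le_mul fun x y => ?_)
    have := hV.dist_le_mul (t, x) (t, y)
    simpa [Prod.dist_eq] using this
  continuousOn x _ := (hV.continuous.comp (by fun_prop)).continuousOn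
  norm_le t _ x _ := hL _
  mul_max_le := by
    have h1 : max (1 - (t₀ : ℝ)) (t₀ - 0) ≤ 1 := max_le (by linarith [t₀.2.1]) (by linarith [t₀.2.2])
    have := mul_le_mul_of_nonneg_left h1 L.2
    push_cast
    simpa using this

section Flow

variable {E : Type*} [NormedAddCommGroup E] [NormedSpace ℝ E]

/-- Two integral curves of a Lipschitz vector field that meet coincide. -/
theorem integralCurve_unique {V : ℝ × E → E} {K : ℝ≥0} (hV : LipschitzWith K V)
    {a b s t : ℝ} {γ δ : ℝ → E}
    (hγ : ∀ r ∈ Icc a b, HasDerivWithinAt γ (V (r, γ r)) (Icc a b) r)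
    (hδ : ∀ r ∈ Icc a b, HasDerivWithinAt δ (V (r, δ r)) (Icc a b) r)
    (hs : s ∈ Icc a b) (ht : t ∈ Icc a b) (h : γ s = δ s) : γ t = δ t := by
  refine sub_eq_zero.1 (eq_zero_of_norm_deriv_le (f := fun r => γ r - δ r)
    (f' := fun r => V (r, γ r) - V (r, δ r)) (K := K)
    (fun r hr => (hγ r hr).sub (hδ r hr)) (fun r _ => ?_) hs ht (sub_eq_zero.2 h))
  have := hV.norm_sub_le (r, γ r) (r, δ r)
  simpa [Prod.norm_def] using this

/-- The flow on `[0,1]` of a bounded Lipschitz time-dependent vector field. -/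
theorem exists_flow [CompleteSpace E] {V : ℝ × E → E} {K L : ℝ≥0}
    (hV : LipschitzWith K V) (hL : ∀ z, ‖V z‖ ≤ L) :
    ∃ φ : E → ℝ → E, (∀ x, φ x 0 = x) ∧
      (∀ x, ∀ t ∈ Icc (0 : ℝ) 1,
        HasDerivWithinAt (φ x) (V (t, φ x t)) (Icc (0 : ℝ) 1) t) ∧
      ContinuousOn (fun q : E × ℝ => φ q.1 q.2) (univ ×ˢ Icc (0 : ℝ) 1) ∧
      ∀ t ∈ Icc (0 : ℝ) 1, ∃ e : E ≃ₜ E, ∀ x, e x = φ x t := by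
  have hPL := isPicardLindelof_of_bounded_lipschitz hV hL
  have hex : ∀ (s : Icc (0 : ℝ) 1) (x : E), ∃ γ : ℝ → E, γ s = x ∧
      ∀ t ∈ Icc (0 : ℝ) 1, HasDerivWithinAt γ (V (t, γ t)) (Icc (0 : ℝ) 1) t := fun s x =>
    (hPL s x).exists_eq_forall_mem_Icc_hasDerivWithinAt (mem_closedBall_self zero_le_one)
  choose σ hσ hσ' using hex
  have hcont : ∀ s : Icc (0 : ℝ) 1,
      ContinuousOn (fun q : E × ℝ => σ s q.1 q.2) (univ ×ˢ Icc (0 : ℝ) 1) := by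
    intro s
    rintro ⟨x, t⟩ ⟨-, ht⟩
    obtain ⟨α, hα, hαc⟩ := (hPL s x).exists_forall_mem_closedBall_eq_hasDerivWithinAt_continuousOn
    have heq : EqOn (fun q : E × ℝ => σ s q.1 q.2) α
        (closedBall x ((1 : ℝ≥0) : ℝ) ×ˢ Icc (0 : ℝ) 1) := by
      rintro ⟨y, r⟩ ⟨hy, hr⟩
      exact integralCurve_unique (δ := fun r => α (y, r)) hV (hσ' s y) (hα y hy).2 s.2 hr
        ((hσ s y).trans (hα y hy).1.symm)
    refine ((hαc.congr heq) (x, t) ⟨mem_closedBall_self zero_le_one, ht⟩).mono_of_mem_nhdsWithin ?_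
    rw [nhdsWithin_prod_eq]
    exact prod_mem_prod (mem_nhdsWithin_of_mem_nhds (closedBall_mem_nhds x zero_lt_one))
      self_mem_nhdsWithin
  have hslice : ∀ (s t : Icc (0 : ℝ) 1), Continuous fun x => σ s x t := by
    intro s t
    rw [← continuousOn_univ]
    exact (hcont s).comp (f := fun x : E => (x, (t : ℝ))) (by fun_prop) fun x _ => ⟨mem_univ _, t.2⟩
  let z : Icc (0 : ℝ) 1 := ⟨0, by simp⟩
  refine ⟨σ z, hσ z, hσ' z, hcont z, fun t ht => ?_⟩
  refine ⟨⟨⟨fun x => σ z x t, fun y => σ ⟨t, ht⟩ y 0, fun x => ?_, fun y => ?_⟩,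
    hslice z ⟨t, ht⟩, hslice ⟨t, ht⟩ z⟩, fun x => rfl⟩
  · exact (integralCurve_unique hV (hσ' _ _) (hσ' z x) ht z.2 (hσ ⟨t, ht⟩ _)).trans (hσ z x)
  · exact (integralCurve_unique hV (hσ' z _) (hσ' ⟨t, ht⟩ y) z.2 ht (hσ z _)).trans (hσ ⟨t, ht⟩ y)

end Flow

theorem continuousLinearMap_apply_eq_sum {d : ℕ} (L : Euc d →L[ℝ] ℝ) (x : Euc d) :
    L x = ∑ i, x i * L (EuclideanSpace.single i 1) := by
  conv_lhs => rw [← (EuclideanSpace.basisFun (Fin d) ℝ).sum_repr x]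
  simp

/-- The weight `sin² (π s)`, vanishing exactly at the integers. -/
def latticeWeight (s : ℝ) : ℝ := Real.sin (Real.pi * s) ^ 2

theorem latticeWeight_eq_zero_iff {s : ℝ} : latticeWeight s = 0 ↔ ∃ k : ℤ, s = k := by
  rw [latticeWeight, pow_eq_zero_iff two_ne_zero, Real.sin_eq_zero_iff]
  refine exists_congr fun k => ?_
  rw [mul_comm, mul_right_inj' Real.pi_ne_zero, eq_comm]

theorem latticeWeight_nonneg (s : ℝ) : 0 ≤ latticeWeight s := sq_nonneg _

/-- The height `g + t p - ℓ` as a function of `(t, x)`. -/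
def height {d : ℕ} (g p : Euc d → ℝ) (ℓ : ℝ) (z : ℝ × Euc d) : ℝ := g z.2 + z.1 * p z.2 - ℓ

/-- The partial derivatives in space of `g + t p`. -/
def heightDeriv {d : ℕ} (g p : Euc d → ℝ) (i : Fin d) (z : ℝ × Euc d) : ℝ :=
  fderiv ℝ g z.2 (EuclideanSpace.single i 1) + z.1 * fderiv ℝ p z.2 (EuclideanSpace.single i 1)

/-- The defect `∑ᵢ sin² (π xᵢ) (∂ᵢ(g + t p))² + (g + t p - ℓ)²`; it vanishes exactly at the
stratified critical points at level `ℓ`. -/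
def critDefect {d : ℕ} (g p : Euc d → ℝ) (ℓ : ℝ) (z : ℝ × Euc d) : ℝ :=
  ∑ i, latticeWeight (z.2 i) * heightDeriv g p i z ^ 2 + height g p ℓ z ^ 2

section Smoothness

variable {d : ℕ} {g p : Euc d → ℝ}

theorem contDiff_latticeWeight_coord (i : Fin d) :
    ContDiff ℝ 1 fun z : ℝ × Euc d => latticeWeight (z.2 i) := by
  unfold latticeWeight
  have : ContDiff ℝ 1 fun z : ℝ × Euc d => z.2 i := (contDiff_euclidean.1 contDiff_snd) i
  fun_prop

theorem contDiff_fderiv_single (hg : ContDiff ℝ 2 g) (i : Fin d) :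
    ContDiff ℝ 1 fun x => fderiv ℝ g x (EuclideanSpace.single i 1) :=
  (hg.fderiv_right (m := 1) (by norm_num)).clm_apply contDiff_const

theorem contDiff_heightDeriv (hg : ContDiff ℝ 2 g) (hp : ContDiff ℝ 2 p) (i : Fin d) :
    ContDiff ℝ 1 (heightDeriv g p i) :=
  ((contDiff_fderiv_single hg i).comp contDiff_snd).add
    (contDiff_fst.mul ((contDiff_fderiv_single hp i).comp contDiff_snd))

theorem contDiff_height (hg : ContDiff ℝ 2 g) (hp : ContDiff ℝ 2 p) (ℓ : ℝ) :
    ContDiff ℝ 1 (height g p ℓ) :=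
  (((hg.of_le (by norm_num)).comp contDiff_snd).add
    (contDiff_fst.mul ((hp.of_le (by norm_num)).comp contDiff_snd))).sub contDiff_const

theorem contDiff_critDefect (hg : ContDiff ℝ 2 g) (hp : ContDiff ℝ 2 p) (ℓ : ℝ) :
    ContDiff ℝ 1 (critDefect g p ℓ) :=
  (ContDiff.sum fun i _ => (contDiff_latticeWeight_coord i).mul
    ((contDiff_heightDeriv hg hp i).pow 2)).add ((contDiff_height hg hp ℓ).pow 2)

end Smoothness

theorem critDefect_nonneg {d : ℕ} (g p : Euc d → ℝ) (ℓ : ℝ) (z : ℝ × Euc d) :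
    0 ≤ critDefect g p ℓ z :=
  add_nonneg (Finset.sum_nonneg fun _ _ => mul_nonneg (latticeWeight_nonneg _) (sq_nonneg _))
    (sq_nonneg _)

theorem exists_mem_openFace {d : ℕ} {w : Fin d → ℤ} {x : Euc d} (hx : x ∈ unitCube d w) :
    ∃ s, x ∈ openFace d w s := by
  classical
  refine ⟨fun i => if x i = w i then some false else
    if x i = w i + 1 then some true else none, fun i => ?_⟩
  have := hx i
  by_cases h1 : x i = w i
  · simp [h1]
  · by_cases h2 : x i = w i + 1
    · simp [h2]
    · simp only [h1, h2, if_false]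
      exact ⟨lt_of_le_of_ne this.1 (Ne.symm h1), lt_of_le_of_ne this.2 h2⟩

theorem critDefect_pos {d : ℕ} {g p : Euc d → ℝ} (hg : ContDiff ℝ 2 g) (hp : ContDiff ℝ 2 p)
    {ℓ : ℝ} {w : Fin d → ℤ} (hw : LocStable d g p w ℓ) {t : ℝ} (ht : t ∈ Icc (0 : ℝ) 1)
    {x : Euc d} (hx : x ∈ unitCube d w) : 0 < critDefect g p ℓ (t, x) := by
  refine (critDefect_nonneg g p ℓ _).lt_of_ne' fun h0 => ?_
  have hsum := Finset.sum_nonneg fun (i : Fin d) (_ : i ∈ Finset.univ) =>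
    mul_nonneg (latticeWeight_nonneg (x i)) (sq_nonneg (heightDeriv g p i (t, x)))
  have hparts := (add_eq_zero_iff_of_nonneg hsum (sq_nonneg (height g p ℓ (t, x)))).1 h0
  have hterms := (Finset.sum_eq_zero_iff_of_nonneg fun (i : Fin d) _ =>
    mul_nonneg (latticeWeight_nonneg (x i)) (sq_nonneg (heightDeriv g p i (t, x)))).1 hparts.1
  obtain ⟨s, hs⟩ := exists_mem_openFace hx
  refine hw t ht x ⟨s, hs, ?_, fun i hi => ?_⟩
  · have := pow_eq_zero_iff two_ne_zero |>.1 hparts.2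
    simp only [height] at this
    linarith
  · have hwt : latticeWeight (x i) ≠ 0 := by
      rw [Ne, latticeWeight_eq_zero_iff]
      rintro ⟨k, hk⟩
      have hi' := hs i
      rw [hi, hk] at hi'
      have h3 : (w i : ℝ) < k := hi'.1
      have h4 : (k : ℝ) < w i + 1 := hi'.2
      norm_cast at h3 h4
      omega
    have hD : heightDeriv g p i (t, x) = 0 := by
      have := hterms i (Finset.mem_univ i)
      simpa [hwt] using this
    have hgd : DifferentiableAt ℝ g x := (hg.differentiable (by norm_num)) x
    have hpd : DifferentiableAt ℝ p x := (hp.differentiable (by norm_num)) x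
    rw [fderiv_fun_add hgd (hpd.const_mul t), fderiv_const_mul hpd]
    simpa [heightDeriv] using hD

/-- A globally defined, compactly supported `C¹` vector field, tangent to all lattice faces, that
coincides with the normalised weighted gradient on a compact set without critical points. -/
theorem exists_vectorField {d : ℕ} {g p : Euc d → ℝ} (hg : ContDiff ℝ 2 g) (hp : ContDiff ℝ 2 p)
    {ℓ : ℝ} {D : Set (Euc d)} (hD : IsCompact D)
    (hpos : ∀ t ∈ Icc (0 : ℝ) 1, ∀ x ∈ D, 0 < critDefect g p ℓ (t, x)) :
    ∃ V : ℝ × Euc d → Euc d, ContDiff ℝ 1 V ∧ HasCompactSupport V ∧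
      (∀ z i, latticeWeight (z.2 i) = 0 → V z i = 0) ∧
      ∀ t ∈ Icc (0 : ℝ) 1, ∀ x ∈ D, ∀ i, V (t, x) i =
        -p x / critDefect g p ℓ (t, x) * (latticeWeight (x i) * heightDeriv g p i (t, x)) := by
  have hK : IsCompact (Icc (0 : ℝ) 1 ×ˢ D) := isCompact_Icc.prod hD
  obtain ⟨η, hη, hη', hη0⟩ := hK.isClosed.isOpen_compl.exists_contDiff_support_eq (n := 1)
  obtain ⟨R, hR⟩ := hK.isBounded.subset_closedBall (0 : ℝ × Euc d)
  let χ : ContDiffBump (0 : ℝ × Euc d) :=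
    ⟨max R 1, max R 1 + 1, lt_max_of_lt_right one_pos, lt_add_one _⟩
  have hηz : ∀ z, 0 ≤ η z := fun z => (hη0 (mem_range_self z)).1
  have hden : ∀ z, critDefect g p ℓ z + η z ≠ 0 := by
    intro z
    have h1 := critDefect_nonneg g p ℓ z
    by_cases hz : z ∈ Icc (0 : ℝ) 1 ×ˢ D
    · have := hpos z.1 hz.1 z.2 hz.2
      have := hηz z
      exact ne_of_gt (by simp only [Prod.mk.eta] at *; linarith)
    · have h2 : η z ≠ 0 := by
        rw [← Function.mem_support, hη]
        exact hz
      have := (hηz z).lt_of_ne' h2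
      exact ne_of_gt (by linarith)
  refine ⟨fun z => (χ z * (-p z.2 / (critDefect g p ℓ z + η z))) •
    WithLp.toLp 2 fun i => latticeWeight (z.2 i) * heightDeriv g p i z, ?_, ?_, ?_, ?_⟩
  · refine ContDiff.smul (χ.contDiff.mul (ContDiff.div
      (((hp.of_le (by norm_num)).comp contDiff_snd).neg)
      ((contDiff_critDefect hg hp ℓ).add (by exact_mod_cast hη')) hden)) ?_
    rw [contDiff_euclidean]
    exact fun i => (contDiff_latticeWeight_coord i).mul (contDiff_heightDeriv hg hp i)
  · exact (χ.hasCompactSupport.mul_right).smul_right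
  · intro z i hz
    simp [hz]
  · intro t ht x hx i
    have hz : (t, x) ∈ Icc (0 : ℝ) 1 ×ˢ D := ⟨ht, hx⟩
    have h1 : χ (t, x) = 1 :=
      χ.one_of_mem_closedBall (closedBall_subset_closedBall (le_max_left _ _) (hR hz))
    have h2 : η (t, x) = 0 := by
      rw [← Function.notMem_support, hη]
      exact fun h => h hz
    simp [h1, h2]

/-- The flow of the vector field: it preserves all lattice faces at all times, and it moves the
excursion set of `g` to that of `g + t p` inside any finite union of stable cubes. -/
theorem exists_latticeFlow {d : ℕ} {g p : Euc d → ℝ} (hg : ContDiff ℝ 2 g) (hp : ContDiff ℝ 2 p)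
    {ℓ : ℝ} {W : Set (Fin d → ℤ)} (hW : W.Finite) (hstable : ∀ w ∈ W, LocStable d g p w ℓ) :
    ∃ φ : Euc d → ℝ → Euc d, (∀ x, φ x 0 = x) ∧
      ContinuousOn (fun q : Euc d × ℝ => φ q.1 q.2) (univ ×ˢ Icc (0 : ℝ) 1) ∧
      (∀ t ∈ Icc (0 : ℝ) 1, ∃ e : Euc d ≃ₜ Euc d, ∀ x, e x = φ x t) ∧
      (∀ x, ∀ t ∈ Icc (0 : ℝ) 1, ∀ i, ∀ k : ℤ,
        ((k : ℝ) ≤ φ x t i ↔ (k : ℝ) ≤ x i) ∧ (φ x t i ≤ k ↔ x i ≤ k)) ∧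
      ∀ w ∈ W, ∀ x ∈ unitCube d w, ∀ t ∈ Icc (0 : ℝ) 1,
        (ℓ ≤ g (φ x t) + t * p (φ x t) ↔ ℓ ≤ g x) := by
  have hcube : ∀ w : Fin d → ℤ, IsCompact (unitCube d w) := by
    intro w
    have : unitCube d w = (EuclideanSpace.equiv (Fin d) ℝ).toHomeomorph ⁻¹'
        Icc (fun i => (w i : ℝ)) (fun i => (w i : ℝ) + 1) := by
      ext x
      simp [unitCube, Pi.le_def, forall_and]
    rw [this]
    exact ((EuclideanSpace.equiv (Fin d) ℝ).toHomeomorph.isCompact_preimage).2 isCompact_Icc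
  have hD : IsCompact (⋃ w ∈ W, unitCube d w) := hW.isCompact_biUnion fun w _ => hcube w
  have hpos : ∀ t ∈ Icc (0 : ℝ) 1, ∀ x ∈ ⋃ w ∈ W, unitCube d w,
      0 < critDefect g p ℓ (t, x) := by
    intro t ht x hx
    obtain ⟨w, hw, hxw⟩ := mem_iUnion₂.1 hx
    exact critDefect_pos hg hp (hstable w hw) ht hxw
  obtain ⟨V, hV, hVc, hV0, hVD⟩ := exists_vectorField hg hp hD hpos
  obtain ⟨K, hK⟩ := ContDiff.lipschitzWith_of_hasCompactSupport hVc hV one_ne_zero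
  obtain ⟨L, hL⟩ := hVc.exists_bound_of_continuous hV.continuous
  obtain ⟨φ, h0, hd, hc, he⟩ := exists_flow (L := L.toNNReal) hK
    fun z => (hL z).trans (Real.le_coe_toNNReal L)
  have hz : (0 : ℝ) ∈ Icc (0 : ℝ) 1 := by simp
  have hface : ∀ x, ∀ t ∈ Icc (0 : ℝ) 1, ∀ i, ∀ k : ℤ,
      ((k : ℝ) ≤ φ x t i ↔ (k : ℝ) ≤ x i) ∧ (φ x t i ≤ k ↔ x i ≤ k) := by
    intro x t ht i k
    have hcoord : ∀ r ∈ Icc (0 : ℝ) 1,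
        HasDerivWithinAt (fun r => φ x r i) (V (r, φ x r) i) (Icc (0 : ℝ) 1) r := fun r hr =>
      (EuclideanSpace.proj (𝕜 := ℝ) i).hasFDerivAt.comp_hasDerivWithinAt r (hd x r hr)
    have hbound : ∀ r (y : Euc d), |V (r, y) i| ≤ K * |y i - k| := by
      intro r y
      set y' : Euc d := y - EuclideanSpace.single i (y i - k)
      have hy' : V (r, y') i = 0 := hV0 _ i (latticeWeight_eq_zero_iff.2 ⟨k, by simp [y']⟩)
      calc |V (r, y) i| = ‖(V (r, y) - V (r, y')) i‖ := by simp [hy']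
        _ ≤ ‖V (r, y) - V (r, y')‖ := PiLp.norm_apply_le _ i
        _ ≤ K * ‖(r, y) - (r, y')‖ := hK.norm_sub_le _ _
        _ = K * |y i - k| := by simp [y', Prod.norm_def]
    have h1 := nonneg_iff_of_abs_deriv_le (f := fun r => φ x r i - k) (K := K)
      (fun r hr => (hcoord r hr).sub_const _) (fun r _ => hbound r _) hz ht
    have h2 := nonneg_iff_of_abs_deriv_le (f := fun r => k - φ x r i) (K := K)
      (fun r hr => (hcoord r hr).const_sub _)
      (fun r _ => by rw [abs_neg, abs_sub_comm]; exact hbound r _) hz ht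
    simp only [sub_nonneg, h0] at h1 h2
    exact ⟨h1.symm, h2.symm⟩
  refine ⟨φ, h0, hc, he, hface, fun w hw x hx t ht => ?_⟩
  have hmem : ∀ r ∈ Icc (0 : ℝ) 1, φ x r ∈ ⋃ w ∈ W, unitCube d w := fun r hr =>
    mem_iUnion₂.2 ⟨w, hw, fun i => by
      have h1 := (hface x r hr i (w i)).1
      have h2 := (hface x r hr i (w i + 1)).2
      push_cast at h2
      exact ⟨h1.2 (hx i).1, h2.2 (hx i).2⟩⟩
  have hcurve : ContinuousOn (fun r => (r, φ x r)) (Icc (0 : ℝ) 1) :=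
    continuousOn_id.prodMk fun r hr => (hd x r hr).continuousWithinAt
  obtain ⟨M, hM⟩ := isCompact_Icc.exists_bound_of_continuousOn
    (f := fun r => p (φ x r) * height g p ℓ (r, φ x r) / critDefect g p ℓ (r, φ x r))
    (((hp.continuous.comp_continuousOn (continuous_snd.comp_continuousOn hcurve)).mul
      ((contDiff_height hg hp ℓ).continuous.comp_continuousOn hcurve)).div
      ((contDiff_critDefect hg hp ℓ).continuous.comp_continuousOn hcurve)
      fun r hr => (hpos r hr _ (hmem r hr)).ne')
  have hderiv : ∀ r ∈ Icc (0 : ℝ) 1, HasDerivWithinAt (fun r => height g p ℓ (r, φ x r))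
      (p (φ x r) * height g p ℓ (r, φ x r) / critDefect g p ℓ (r, φ x r) *
        height g p ℓ (r, φ x r)) (Icc (0 : ℝ) 1) r := by
    intro r hr
    have hq := (hpos r hr _ (hmem r hr)).ne'
    have hgd := ((hg.differentiable (by norm_num)) (φ x r)).hasFDerivAt.comp_hasDerivWithinAt r
      (hd x r hr)
    have hpd := ((hp.differentiable (by norm_num)) (φ x r)).hasFDerivAt.comp_hasDerivWithinAt r
      (hd x r hr)
    refine ((hgd.add ((hasDerivWithinAt_id r _).mul hpd)).sub_const ℓ).congr_deriv ?_
    rw [continuousLinearMap_apply_eq_sum (fderiv ℝ g _),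
      continuousLinearMap_apply_eq_sum (fderiv ℝ p _)]
    have hS : ∑ i, V (r, φ x r) i * heightDeriv g p i (r, φ x r) =
        -p (φ x r) / critDefect g p ℓ (r, φ x r) *
          (critDefect g p ℓ (r, φ x r) - height g p ℓ (r, φ x r) ^ 2) := by
      conv_rhs => enter [2, 1]; rw [critDefect]
      rw [add_sub_cancel_right, Finset.mul_sum]
      refine Finset.sum_congr rfl fun i _ => ?_
      rw [hVD r hr _ (hmem r hr) i]
      ring
    have hsplit : ∑ i, V (r, φ x r) i * heightDeriv g p i (r, φ x r) =
        ∑ i, V (r, φ x r) i * fderiv ℝ g (φ x r) (EuclideanSpace.single i 1) +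
        r * ∑ i, V (r, φ x r) i * fderiv ℝ p (φ x r) (EuclideanSpace.single i 1) := by
      rw [Finset.mul_sum, ← Finset.sum_add_distrib]
      refine Finset.sum_congr rfl fun i _ => ?_
      simp only [heightDeriv]
      ring
    rw [hsplit] at hS
    simp only [id_eq, one_mul, Function.comp_apply]
    rw [add_left_comm, hS]
    field_simp
    ring
  have := nonneg_iff_of_abs_deriv_le (K := M) hderiv
    (fun r hr => by rw [abs_mul]; exact mul_le_mul_of_nonneg_right (hM r hr) (abs_nonneg _)) hz ht
  simpa [height, h0] using this.symm

section Cubes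

theorem exists_mem_unitCube {d : ℕ} (x : Euc d) : ∃ w, x ∈ unitCube d w :=
  ⟨fun i => ⌊x i⌋, fun _ => ⟨Int.floor_le _, (Int.lt_floor_add_one _).le⟩⟩

/-- Nearby points lie in a common lattice cube. -/
theorem eventually_exists_common_unitCube {d : ℕ} (y : Euc d) :
    ∀ᶠ z in 𝓝 y, ∃ w, y ∈ unitCube d w ∧ z ∈ unitCube d w := by
  have hcoord : ∀ i, ∀ᶠ z : Euc d in 𝓝 y, ∃ k : ℤ,
      ((k : ℝ) ≤ y i ∧ y i ≤ k + 1) ∧ ((k : ℝ) ≤ z i ∧ z i ≤ k + 1) := by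
    intro i
    have hcont : ContinuousAt (fun z : Euc d => z i) y := by fun_prop
    have h1 : ∀ᶠ z : Euc d in 𝓝 y, z i < ⌊y i⌋ + 1 :=
      hcont.eventually_lt continuousAt_const (Int.lt_floor_add_one _)
    have h2 : ∀ᶠ z : Euc d in 𝓝 y, (⌈y i⌉ : ℝ) - 1 < z i :=
      continuousAt_const.eventually_lt hcont (by linarith [Int.ceil_lt_add_one (y i)])
    filter_upwards [h1, h2] with z hz1 hz2
    rcases le_total (y i) (z i) with h | h
    · exact ⟨⌊y i⌋, ⟨Int.floor_le _, (Int.lt_floor_add_one _).le⟩,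
        (Int.floor_le _).trans h, hz1.le⟩
    · refine ⟨⌈y i⌉ - 1, ?_, ?_⟩ <;> push_cast
      · exact ⟨by linarith [Int.ceil_lt_add_one (y i)], by linarith [Int.le_ceil (y i)]⟩
      · exact ⟨hz2.le, by linarith [Int.le_ceil (y i)]⟩
  filter_upwards [eventually_all.2 hcoord] with z hz
  choose w hw using hz
  exact ⟨w, fun i => (hw i).1, fun i => (hw i).2⟩

/-- A bounded set meets only finitely many lattice cubes. -/
theorem finite_unitCubes_of_isBounded {d : ℕ} {S : Set (Euc d)} (hS : Bornology.IsBounded S) :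
    {w | ∃ y ∈ S, y ∈ unitCube d w}.Finite := by
  obtain ⟨R, hR⟩ := hS.subset_closedBall (0 : Euc d)
  refine (finite_Icc (fun _ : Fin d => ⌊-R - 1⌋) (fun _ => ⌈R⌉)).subset ?_
  rintro w ⟨y, hy, hyw⟩
  have hb : ∀ i, |y i| ≤ R := fun i =>
    (PiLp.norm_apply_le y i).trans (by simpa using hR hy)
  refine ⟨fun i => ?_, fun i => ?_⟩
  · have h1 := (abs_le.1 (hb i)).1
    have : ((⌊-R - 1⌋ : ℤ) : ℝ) ≤ w i := by linarith [Int.floor_le (-R - 1), (hyw i).2]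
    exact_mod_cast this
  · have h1 := (abs_le.1 (hb i)).2
    have : (w i : ℝ) ≤ ((⌈R⌉ : ℤ) : ℝ) := by linarith [Int.le_ceil R, (hyw i).1]
    exact_mod_cast this

end Cubes

section Components

/-- A locally constant property is constant on a preconnected set. -/
theorem IsPreconnected.of_eventually_iff {X : Type*} [TopologicalSpace X] {s : Set X}
    (hs : IsPreconnected s) {Q : X → Prop} (h : ∀ a ∈ s, ∀ᶠ b in 𝓝[s] a, (Q a ↔ Q b))
    {x y : X} (hx : x ∈ s) (hy : y ∈ s) (hQ : Q x) : Q y :=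
  (hs.induction₂' (fun a b => Q a ↔ Q b)
    (fun a ha => (h a ha).mono fun _ hb => ⟨hb, hb.symm⟩)
    (fun _ _ _ _ _ _ h1 h2 => h1.trans h2) hx hy).1 hQ

theorem IsClosed.connectedComponentIn' {X : Type*} [TopologicalSpace X] {A : Set X}
    (hA : IsClosed A) (x : X) : IsClosed (connectedComponentIn A x) := by
  by_cases hx : x ∈ A
  · refine closure_subset_iff_isClosed.1 ?_
    exact isPreconnected_connectedComponentIn.closure.subset_connectedComponentIn
      (subset_closure (mem_connectedComponentIn hx))
      (closure_minimal (connectedComponentIn_subset A x) hA)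
  · rw [connectedComponentIn_eq_empty hx]
    exact isClosed_empty

theorem JoinedIn.mem_connectedComponentIn {X : Type*} [TopologicalSpace X] {A : Set X} {x y : X}
    (h : JoinedIn A x y) : y ∈ connectedComponentIn A x := by
  obtain ⟨γ, hγ⟩ := h
  exact (isPreconnected_range γ.continuous).subset_connectedComponentIn ⟨0, γ.source⟩
    (range_subset_iff.2 hγ) ⟨1, γ.target⟩

theorem mem_boundedPart_iff {d : ℕ} {A : Set (Euc d)} {x : Euc d} :
    x ∈ boundedPart d A ↔ x ∈ A ∧ Bornology.IsBounded (connectedComponentIn A x) := by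
  simp only [boundedPart, unboundedPart, Set.mem_sdiff, Set.mem_ofPred_eq]
  tauto

/-- A path in `A` that starts in the bounded part of `A` stays in it. -/
theorem JoinedIn.boundedPart {d : ℕ} {A : Set (Euc d)} {x y : Euc d} (h : JoinedIn A x y)
    (hx : x ∈ boundedPart d A) : JoinedIn (boundedPart d A) x y := by
  obtain ⟨γ, hγ⟩ := h
  refine ⟨γ, fun t => mem_boundedPart_iff.2 ⟨hγ t, ?_⟩⟩
  have hmem : γ t ∈ connectedComponentIn A x :=
    (isPreconnected_range γ.continuous).subset_connectedComponentIn ⟨0, γ.source⟩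
      (range_subset_iff.2 hγ) ⟨t, rfl⟩
  rw [← connectedComponentIn_eq hmem]
  exact (mem_boundedPart_iff.1 hx).2

/-- Near a point where `f` exceeds `ℓ` or is regular, the superlevel set is path connected to
that point. -/
theorem eventually_joinedIn_superlevel {E : Type*} [NormedAddCommGroup E] [NormedSpace ℝ E]
    {f : E → ℝ} (hf : ContDiff ℝ 1 f) {ℓ : ℝ} {y : E} (hy : ℓ ≤ f y)
    (hreg : f y = ℓ → fderiv ℝ f y ≠ 0) :
    ∀ᶠ z in 𝓝 y, ℓ ≤ f z → JoinedIn {z | ℓ ≤ f z} z y := by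
  have habove : ∀ a, ℓ < f a → ∃ ρ > 0, ball a ρ ⊆ {z | ℓ ≤ f z} := fun a ha => by
    obtain ⟨ρ, hρ, hball⟩ := Metric.mem_nhds_iff.1
      (continuousAt_const.eventually_lt hf.continuous.continuousAt ha)
    exact ⟨ρ, hρ, fun z hz => show ℓ ≤ f z from le_of_lt (hball hz)⟩
  have hsegment : ∀ {a b : E} {U : Set E}, Convex ℝ U → a ∈ U → b ∈ U → U ⊆ {z | ℓ ≤ f z} →
      JoinedIn {z | ℓ ≤ f z} a b := fun hU ha hb h =>
    JoinedIn.of_segment_subset ((hU.segment_subset ha hb).trans h)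
  rcases hy.eq_or_lt with heq | hlt
  · obtain ⟨e, he⟩ : ∃ e, 0 < fderiv ℝ f y e := by
      obtain ⟨e, he⟩ : ∃ e, fderiv ℝ f y e ≠ 0 := by
        by_contra! h
        exact hreg heq.symm (ContinuousLinearMap.ext h)
      rcases lt_or_gt_of_ne he with h | h
      · exact ⟨-e, by simpa using h⟩
      · exact ⟨e, h⟩
    have hcont : Continuous fun z => fderiv ℝ f z e :=
      (hf.continuous_fderiv one_ne_zero).clm_apply continuous_const
    obtain ⟨ρ, hρ, hball⟩ := Metric.mem_nhds_iff.1
      (continuousAt_const.eventually_lt hcont.continuousAt he)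
    obtain ⟨δ, hδ, hδρ⟩ : ∃ δ > 0, δ * ‖e‖ < ρ / 2 := by
      refine ⟨ρ / 2 / (‖e‖ + 1), by positivity, ?_⟩
      rw [div_mul_eq_mul_div, div_lt_iff₀ (by positivity)]
      nlinarith [norm_nonneg e]
    have hmem : ∀ z ∈ ball y (ρ / 2), ∀ s ∈ Icc 0 δ, z + s • e ∈ ball y ρ := by
      intro z hz s hs
      have h1 : ‖s • e‖ ≤ δ * ‖e‖ := by
        rw [norm_smul, Real.norm_of_nonneg hs.1]
        exact mul_le_mul_of_nonneg_right hs.2 (norm_nonneg _)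
      rw [mem_ball_iff_norm] at hz ⊢
      calc ‖z + s • e - y‖ = ‖(z - y) + s • e‖ := by congr 1; abel
        _ ≤ ‖z - y‖ + ‖s • e‖ := norm_add_le _ _
        _ < ρ := by linarith
    have hmono : ∀ z ∈ ball y (ρ / 2), StrictMonoOn (fun s : ℝ => f (z + s • e)) (Icc 0 δ) := by
      intro z hz
      have hder : ∀ s : ℝ, HasDerivAt (fun s : ℝ => f (z + s • e))
          (fderiv ℝ f (z + s • e) e) s := fun s => by
        have hline : HasDerivAt (fun s : ℝ => z + s • e) e s := by
          simpa using ((hasDerivAt_id s).smul_const e).const_add z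
        exact ((hf.differentiable one_ne_zero) _).hasFDerivAt.comp_hasDerivAt s hline
      refine strictMonoOn_of_deriv_pos (convex_Icc 0 δ)
        (fun s _ => (hder s).continuousAt.continuousWithinAt) fun s hs => ?_
      rw [(hder s).deriv]
      exact hball (hmem z hz s (interior_subset hs))
    have hup : ∀ z ∈ ball y (ρ / 2), ℓ ≤ f z → JoinedIn {z | ℓ ≤ f z} z (z + δ • e) := by
      intro z hz hzf
      refine JoinedIn.of_segment_subset ?_
      rw [segment_eq_image']
      rintro _ ⟨θ, hθ, rfl⟩
      have hθδ : θ * δ ∈ Icc 0 δ :=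
        ⟨mul_nonneg hθ.1 hδ.le, mul_le_of_le_one_left hδ.le hθ.2⟩
      have := (hmono z hz).monotoneOn (left_mem_Icc.2 hδ.le) hθδ hθδ.1
      simp only [zero_smul, add_zero] at this
      simpa [smul_smul] using hzf.trans this
    have hyρ : y ∈ ball y (ρ / 2) := mem_ball_self (by positivity)
    have hyδ : ℓ < f (y + δ • e) := by
      have := hmono y hyρ (left_mem_Icc.2 hδ.le) (right_mem_Icc.2 hδ.le) hδ
      simp only [zero_smul, add_zero] at this
      linarith
    obtain ⟨ε, hε, hεball⟩ := habove _ hyδ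
    filter_upwards [ball_mem_nhds y (half_pos hρ), ball_mem_nhds y hε] with z hz hzε hzf
    refine (hup z hz hzf).trans (JoinedIn.trans ?_ (hup y hyρ hy).symm)
    refine hsegment (convex_ball (y + δ • e) ε) ?_ (mem_ball_self hε) hεball
    simpa using hzε
  · obtain ⟨ρ, hρ, hball⟩ := habove y hlt
    filter_upwards [ball_mem_nhds y hρ] with z hz _
    exact hsegment (convex_ball y ρ) hz (mem_ball_self hρ) hball

theorem fderiv_ne_zero_of_not_isStratCrit {d : ℕ} {f : Euc d → ℝ} {w : Fin d → ℤ} {ℓ : ℝ}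
    {y : Euc d} (hy : y ∈ unitCube d w) (hcrit : ¬ IsStratCrit d f w ℓ y) (hfy : f y = ℓ) :
    fderiv ℝ f y ≠ 0 := by
  obtain ⟨s, hs⟩ := exists_mem_openFace hy
  exact fun h => hcrit ⟨s, hs, hfy, fun i _ => by simp [h]⟩

/-- If every cube reached by a path in `{f ≥ ℓ}` from `x` has no stratified critical point, then
the component of `x` in `{f ≥ ℓ}` is path connected. -/
theorem joinedIn_of_mem_connectedComponentIn {d : ℕ} {f : Euc d → ℝ} (hf : ContDiff ℝ 1 f)
    {ℓ : ℝ} {x y : Euc d} (hx : ℓ ≤ f x)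
    (hgood : ∀ y, JoinedIn {z | ℓ ≤ f z} x y → ∀ w, y ∈ unitCube d w →
      ∀ z, ¬ IsStratCrit d f w ℓ z)
    (hy : y ∈ connectedComponentIn {z | ℓ ≤ f z} x) : JoinedIn {z | ℓ ≤ f z} x y := by
  refine isPreconnected_connectedComponentIn.of_eventually_iff
    (Q := fun y => JoinedIn {z | ℓ ≤ f z} x y) (fun a ha => ?_)
    (mem_connectedComponentIn (F := {z | ℓ ≤ f z}) hx) hy (JoinedIn.refl hx)
  have haA : a ∈ {z | ℓ ≤ f z} := connectedComponentIn_subset _ _ ha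
  by_cases H : ∃ w, a ∈ unitCube d w ∧ ∀ z, ¬ IsStratCrit d f w ℓ z
  · obtain ⟨w, haw, hw⟩ := H
    filter_upwards [self_mem_nhdsWithin, mem_nhdsWithin_of_mem_nhds
      (eventually_joinedIn_superlevel hf haA (fderiv_ne_zero_of_not_isStratCrit haw (hw a)))]
      with b hb hba
    have hbA : b ∈ {z | ℓ ≤ f z} := connectedComponentIn_subset _ _ hb
    have hj := hba hbA
    exact ⟨fun h => h.trans hj.symm, fun h => h.trans hj⟩
  · filter_upwards [mem_nhdsWithin_of_mem_nhds (eventually_exists_common_unitCube a)]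
      with b ⟨w, haw, hbw⟩
    exact iff_of_false (fun h => H ⟨w, haw, hgood a h w haw⟩)
      (fun h => H ⟨w, haw, hgood b h w hbw⟩)

/-- A homeomorphism matching `A` with `B` on a neighbourhood of a bounded, relatively open component
of the closed set `A` maps that component into the bounded part of `B`. -/
theorem mem_boundedPart_of_homeomorph {d : ℕ} (e : Euc d ≃ₜ Euc d) {A B Q : Set (Euc d)}
    (hA : IsClosed A) (hAB : ∀ x ∈ Q, e x ∈ B ↔ x ∈ A) {x : Euc d} (hx : x ∈ boundedPart d A)
    (hopen : ∀ y ∈ connectedComponentIn A x, ∀ᶠ z in 𝓝 y, z ∈ A → z ∈ connectedComponentIn A x)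
    (hQ : ∀ y ∈ connectedComponentIn A x, ∀ᶠ z in 𝓝 y, z ∈ Q) :
    e x ∈ boundedPart d B := by
  obtain ⟨hxA, hbdd⟩ := mem_boundedPart_iff.1 hx
  set C := connectedComponentIn A x
  have hxC : x ∈ C := mem_connectedComponentIn hxA
  have hcomp : IsCompact (e '' C) :=
    (isCompact_of_isClosed_isBounded (hA.connectedComponentIn' x) hbdd).image e.continuous
  have hxB : e x ∈ B := (hAB x (hQ x hxC).self_of_nhds).2 hxA
  refine mem_boundedPart_iff.2 ⟨hxB, hcomp.isBounded.subset fun y hy => ?_⟩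
  refine isPreconnected_connectedComponentIn.of_eventually_iff (Q := fun y => y ∈ e '' C)
    (fun a ha => ?_) (mem_connectedComponentIn hxB) hy (mem_image_of_mem e hxC)
  by_cases haC : a ∈ e '' C
  · obtain ⟨y, hyC, rfl⟩ := haC
    have htend : Tendsto e.symm (𝓝 (e y)) (𝓝 y) := by
      simpa using e.symm.continuous.tendsto (e y)
    filter_upwards [self_mem_nhdsWithin, mem_nhdsWithin_of_mem_nhds (htend (hopen y hyC)),
      mem_nhdsWithin_of_mem_nhds (htend (hQ y hyC))] with b hb hb1 hb2
    have hbA : e.symm b ∈ A :=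
      (hAB _ hb2).1 (by simpa using connectedComponentIn_subset _ _ hb)
    exact iff_of_true (mem_image_of_mem e hyC) ⟨e.symm b, hb1 hbA, by simp⟩
  · filter_upwards [mem_nhdsWithin_of_mem_nhds (hcomp.isClosed.isOpen_compl.mem_nhds haC)]
      with b hb
    exact iff_of_false haC hb

end Components

/-- The lattice cubes met by the bounded components of `A` that meet `D`. -/
def touchedCubes (d : ℕ) (A D : Set (Euc d)) : Set (Fin d → ℤ) :=
  {w | ∃ x ∈ boundedPart d A ∩ D, ∃ y ∈ connectedComponentIn A x, y ∈ unitCube d w}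

theorem finite_touchedCubes {d : ℕ} {A D : Set (Euc d)}
    (hfin : FinitelyManyComponents d (A ∩ D)) : (touchedCubes d A D).Finite := by
  have hsub : touchedCubes d A D ⊆ ⋃ C ∈ {C | ∃ x ∈ A ∩ D, C = connectedComponentIn (A ∩ D) x},
      {w | ∃ y ∈ {y | ∃ x ∈ C, x ∈ boundedPart d A ∧ y ∈ connectedComponentIn A x},
        y ∈ unitCube d w} := by
    rintro w ⟨x, ⟨hx, hxD⟩, y, hy, hyw⟩
    have hxA : x ∈ A ∩ D := ⟨hx.1, hxD⟩
    exact mem_biUnion (⟨x, hxA, rfl⟩ : _ ∈ {C | ∃ x ∈ A ∩ D, C = connectedComponentIn (A ∩ D) x})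
      ⟨y, ⟨x, mem_connectedComponentIn hxA, hx, hy⟩, hyw⟩
  refine (hfin.biUnion ?_).subset hsub
  rintro _ ⟨c, hc, rfl⟩
  refine finite_unitCubes_of_isBounded ?_
  by_cases hb : Bornology.IsBounded (connectedComponentIn A c)
  · refine hb.subset ?_
    rintro y ⟨x, hx, -, hy⟩
    rwa [connectedComponentIn_eq (connectedComponentIn_mono c inter_subset_left hx)]
  · convert Bornology.isBounded_empty
    refine eq_empty_of_forall_notMem ?_
    rintro y ⟨x, hx, hxb, -⟩
    refine hb ?_
    rw [connectedComponentIn_eq (connectedComponentIn_mono c inter_subset_left hx)]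
    exact (mem_boundedPart_iff.1 hxb).2

/-- A bounded component of `{f ≥ ℓ}` that cannot be joined to a cube outside `S` meets only cubes of
`S`, and is relatively open, as soon as the cubes of `S` have no stratified critical points. -/
theorem bounded_component_of_not_joinedIn {d : ℕ} {f : Euc d → ℝ} (hf : ContDiff ℝ 1 f)
    {ℓ : ℝ} {S : Set (Fin d → ℤ)} (hS : ∀ w ∈ S, ∀ z, ¬ IsStratCrit d f w ℓ z) {x : Euc d}
    (hx : x ∈ boundedPart d {z | ℓ ≤ f z})
    (hsep : ∀ w ∉ S, ∀ y ∈ unitCube d w, ¬ JoinedIn (boundedPart d {z | ℓ ≤ f z}) x y) :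
    (∀ y ∈ connectedComponentIn {z | ℓ ≤ f z} x, ∀ w, y ∈ unitCube d w → w ∈ S) ∧
      ∀ y ∈ connectedComponentIn {z | ℓ ≤ f z} x, ∀ᶠ z in 𝓝 y,
        z ∈ {z | ℓ ≤ f z} → z ∈ connectedComponentIn {z | ℓ ≤ f z} x := by
  have hmem : ∀ y, JoinedIn {z | ℓ ≤ f z} x y → ∀ w, y ∈ unitCube d w → w ∈ S :=
    fun y hy w hyw => by_contra fun hw => hsep w hw y hyw (hy.boundedPart hx)
  have hjoin : ∀ y ∈ connectedComponentIn {z | ℓ ≤ f z} x, JoinedIn {z | ℓ ≤ f z} x y :=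
    fun y hy => joinedIn_of_mem_connectedComponentIn hf hx.1
      (fun y hy w hyw => hS w (hmem y hy w hyw)) hy
  refine ⟨fun y hy => hmem y (hjoin y hy), fun y hy => ?_⟩
  obtain ⟨w, hyw⟩ := exists_mem_unitCube y
  have hyA : y ∈ {z | ℓ ≤ f z} := connectedComponentIn_subset _ _ hy
  filter_upwards [eventually_joinedIn_superlevel hf hyA
    (fderiv_ne_zero_of_not_isStratCrit hyw (hS w (hmem y (hjoin y hy) w hyw) y))] with z hz hzA
  exact ((hjoin y hy).trans (hz hzA).symm).mem_connectedComponentIn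

theorem image_eq_of_forall_mem_iff {X : Type*} (e : X ≃ X) {φ : X → X} (he : ∀ x, e x = φ x)
    {S T : Set X} (h : ∀ x, φ x ∈ T ↔ x ∈ S) : φ '' S = T := by
  have hφ : φ = e := funext fun x => (he x).symm
  subst hφ
  ext y
  rw [mem_image_equiv, ← h, e.apply_symm_apply]

/-- If the excursion sets `{g ≥ ℓ} ∩ D` and `{g+p ≥ ℓ} ∩ D` have finitely
many components and no cube of `D` lies in the finite-range unstable set `U_FR(g,p)`,
then there is a stratified isotopy of `D` carrying `{g ≥ ℓ} ∩ D` onto `{g+tp ≥ ℓ} ∩ D`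
for every `t`, starting at the identity, and additionally matching up the unbounded
parts at time `1`. -/
theorem statement_2 (d n : ℕ) (hd : 1 ≤ d) (ℓ : ℝ)
    (v : Fin n → Fin d → ℤ) (hv : Function.Injective v)
    (g p : Euc d → ℝ) (hg : ContDiff ℝ 2 g) (hp : ContDiff ℝ 2 p)
    (hfin₁ : FinitelyManyComponents d ({x | ℓ ≤ g x} ∩ ⋃ i, unitCube d (v i)))
    (hfin₂ : FinitelyManyComponents d ({x | ℓ ≤ g x + p x} ∩ ⋃ i, unitCube d (v i)))
    (hstable : ∀ i : Fin n, v i ∉ UFR d g p ℓ) :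
    ∃ H : Euc d → ℝ → Euc d, IsStratIsotopy d n v H ∧
      (∀ t ∈ Set.Icc (0:ℝ) 1,
        (fun x => H x t) '' ({x | ℓ ≤ g x} ∩ ⋃ i, unitCube d (v i)) =
          {x | ℓ ≤ g x + t * p x} ∩ ⋃ i, unitCube d (v i)) ∧
      (∀ x ∈ ⋃ i, unitCube d (v i), H x 0 = x) ∧
      (fun x => H x 1) '' (unboundedPart d {x | ℓ ≤ g x} ∩ ⋃ i, unitCube d (v i)) =
        unboundedPart d {x | ℓ ≤ g x + p x} ∩ ⋃ i, unitCube d (v i) := by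
  set D : Set (Euc d) := ⋃ i, unitCube d (v i) with hDdef
  set A : Set (Euc d) := {x | ℓ ≤ g x}
  set B : Set (Euc d) := {x | ℓ ≤ g x + p x}
  have hgp : ContDiff ℝ 2 fun x => g x + p x := hg.add hp
  have hcritA : ∀ w ∈ (ULoc d g p ℓ)ᶜ, ∀ z, ¬ IsStratCrit d g w ℓ z := fun w hw z => by
    simpa using (not_not.1 hw) 0 (by simp) z
  have hcritB : ∀ w ∈ (ULoc d g p ℓ)ᶜ, ∀ z, ¬ IsStratCrit d (fun x => g x + p x) w ℓ z :=
    fun w hw z => by simpa using (not_not.1 hw) 1 (by simp) z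
  have hcompA := fun x (hx : x ∈ boundedPart d A ∩ D) =>
    bounded_component_of_not_joinedIn (hg.of_le one_le_two) hcritA hx.1 fun w hw y hy hj => by
      obtain ⟨i, hi⟩ := mem_iUnion.1 hx.2
      exact hstable i (Or.inr ⟨w, not_not.1 hw, Or.inl ⟨x, hi, y, hy, hj⟩⟩)
  have hcompB := fun x (hx : x ∈ boundedPart d B ∩ D) =>
    bounded_component_of_not_joinedIn (hgp.of_le one_le_two) hcritB hx.1 fun w hw y hy hj => by
      obtain ⟨i, hi⟩ := mem_iUnion.1 hx.2
      exact hstable i (Or.inr ⟨w, not_not.1 hw, Or.inr ⟨x, hi, y, hy, hj⟩⟩)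
  set W : Set (Fin d → ℤ) := range v ∪ (touchedCubes d A D ∪ touchedCubes d B D)
  have hW : W.Finite :=
    (finite_range v).union ((finite_touchedCubes hfin₁).union (finite_touchedCubes hfin₂))
  have hWstable : ∀ w ∈ W, LocStable d g p w ℓ := by
    rintro w (⟨i, rfl⟩ | ⟨x, hx, y, hy, hyw⟩ | ⟨x, hx, y, hy, hyw⟩)
    · exact not_not.1 fun h => hstable i (Or.inl h)
    · exact not_not.1 ((hcompA x hx).1 y hy w hyw)
    · exact not_not.1 ((hcompB x hx).1 y hy w hyw)
  obtain ⟨φ, h0, hc, he, hface, hexc⟩ := exists_latticeFlow hg hp hW hWstable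
  have hcube : ∀ t ∈ Icc (0 : ℝ) 1, ∀ w x, φ x t ∈ unitCube d w ↔ x ∈ unitCube d w := by
    refine fun t ht w x => forall_congr' fun i => and_congr (hface x t ht i (w i)).1 ?_
    simpa using (hface x t ht i (w i + 1)).2
  have hD : ∀ t ∈ Icc (0 : ℝ) 1, ∀ x, φ x t ∈ D ↔ x ∈ D := fun t ht x => by
    simp only [hDdef, mem_iUnion, hcube t ht]
  have hexcD : ∀ t ∈ Icc (0 : ℝ) 1, ∀ x ∈ D,
      (ℓ ≤ g (φ x t) + t * p (φ x t) ↔ ℓ ≤ g x) := fun t ht x hx => by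
    obtain ⟨i, hi⟩ := mem_iUnion.1 hx
    exact hexc _ (Or.inl ⟨i, rfl⟩) x hi t ht
  have h1 : (1 : ℝ) ∈ Icc (0 : ℝ) 1 := by simp
  obtain ⟨e, he1⟩ := he 1 h1
  have hAB : ∀ x ∈ ⋃ w ∈ W, unitCube d w, (e x ∈ B ↔ x ∈ A) := fun x hx => by
    obtain ⟨w, hw, hxw⟩ := mem_iUnion₂.1 hx
    have hiff := hexc w hw x hxw 1 h1
    rw [one_mul] at hiff
    rw [he1]
    exact hiff
  have hBA : ∀ x ∈ ⋃ w ∈ W, unitCube d w, (e.symm x ∈ A ↔ x ∈ B) := fun x hx => by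
    obtain ⟨w, hw, hxw⟩ := mem_iUnion₂.1 hx
    have hxw' : e.symm x ∈ unitCube d w := by
      rwa [← hcube 1 h1, ← he1, e.apply_symm_apply]
    rw [← hAB _ (mem_iUnion₂.2 ⟨w, hw, hxw'⟩), e.apply_symm_apply]
  have hDe : ∀ x, e x ∈ D ↔ x ∈ D := fun x => by rw [he1, hD 1 h1]
  have hbdd : ∀ x ∈ D, (e x ∈ boundedPart d B ↔ x ∈ boundedPart d A) := by
    intro x hx
    constructor
    · intro hb
      have hmem : e x ∈ boundedPart d B ∩ D := ⟨hb, (hDe x).2 hx⟩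
      have := mem_boundedPart_of_homeomorph e.symm
        (isClosed_le continuous_const (hg.continuous.add hp.continuous)) hBA hb
        (hcompB _ hmem).2 fun y hy => ?_
      · simpa using this
      · filter_upwards [eventually_exists_common_unitCube y] with z ⟨w, hyw, hzw⟩
        exact mem_iUnion₂.2 ⟨w, Or.inr (Or.inr ⟨_, hmem, y, hy, hyw⟩), hzw⟩
    · intro hb
      refine mem_boundedPart_of_homeomorph e (isClosed_le continuous_const hg.continuous) hAB hb
        (hcompA x ⟨hb, hx⟩).2 fun y hy => ?_
      filter_upwards [eventually_exists_common_unitCube y] with z ⟨w, hyw, hzw⟩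
      exact mem_iUnion₂.2 ⟨w, Or.inr (Or.inl ⟨x, ⟨hb, hx⟩, y, hy, hyw⟩), hzw⟩
  refine ⟨φ, ⟨hc.mono (prod_mono_left (subset_univ _)), fun t ht => ?_, fun t ht i s => ?_⟩,
    fun t ht => ?_, fun x _ => h0 x, ?_⟩
  · obtain ⟨e, he⟩ := he t ht
    exact ⟨e.subtype fun x => by rw [he, hD t ht], fun x => he x⟩
  · obtain ⟨e, he⟩ := he t ht
    refine image_eq_of_forall_mem_iff e.toEquiv he fun x => forall_congr' fun j => ?_
    have hk := hface x t ht j (v i j)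
    have hk1 := hface x t ht j (v i j + 1)
    push_cast at hk1
    rcases s j with _ | _ | _
    · exact and_congr (by simpa using hk.2.not) (by simpa using hk1.1.not)
    · simp only [le_antisymm_iff, hk.1, hk.2]
    · simp only [le_antisymm_iff, hk1.1, hk1.2]
  · obtain ⟨e, he⟩ := he t ht
    refine image_eq_of_forall_mem_iff e.toEquiv he fun x => ?_
    simp only [mem_inter_iff, hD t ht]
    exact and_congr_left fun hx => hexcD t ht x hx
  · refine image_eq_of_forall_mem_iff e.toEquiv he1 fun x => ?_
    rw [mem_inter_iff, mem_inter_iff, hD 1 h1]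
    refine and_congr_left fun hx => ?_
    have hiff := hexcD 1 h1 x hx
    rw [one_mul] at hiff
    have hb := hbdd x hx
    rw [he1, mem_boundedPart_iff, mem_boundedPart_iff] at hb
    change (ℓ ≤ _ ∧ _) ↔ (ℓ ≤ _ ∧ _) at hb
    change (ℓ ≤ _ ∧ _) ↔ (ℓ ≤ _ ∧ _)
    tauto

end
end

section
/- For every d ≥ 1 there exist constants C_d ≥ 20 and C′_d > 0, depending only on d, with the following property. Let B := B_w = w + [0,1]^d be a unit cube, ℓ ∈ ℝ, let g, p : ℝ^d → ℝ be C², and let A₁ ∈ (0,1), A₂ ≥ 1 and A₀ ∈ (0, A₁²/(C_d·A₂)) satisfy: |∇g(x)| > A₁ for every x ∈ B with g(x) = ℓ; ‖∇²g(x)‖ < A₂ for every x ∈ B; sup_{x∈B} max(|p(x)|, |∇p(x)|) < A₀; and p(x) = 0 for every x ∈ B with dist(x, ∂B) ≤ 2A₀/A₁. Then there exists an injective C¹ map φ, defined on a relatively open neighbourhood of {g = ℓ} ∩ B in B, of the form φ(x) = x + r_x·∇g(x)/|∇g(x)| with |r_x| ≤ 2A₀/A₁ and (g+p)(φ(x))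 = g(x), such that for every open set E ⊆ B with diameter at most A₁/(3A₂) and with dist(E, ∂B) ≥ 2A₀/A₁, one has |ℋ^{d−1}[φ({g = ℓ} ∩ E)] − ℋ^{d−1}[{g = ℓ} ∩ E]| ≤ C′_d·(A₀A₂/A₁²)·ℋ^{d−1}[{g = ℓ} ∩ E]. -/
open MeasureTheory Filter Set Topology Metric
open scoped ENNReal NNReal

noncomputable section

section NormalProjection

variable {H : Type*} [NormedAddCommGroup H] [InnerProductSpace ℝ H]

/-- Normalizing vectors is Lipschitz away from the origin. -/
theorem norm_normalize_sub_le {a b : H} (ha : a ≠ 0) (hb : b ≠ 0) :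
    ‖‖a‖⁻¹ • a - ‖b‖⁻¹ • b‖ ≤ 2 * ‖a - b‖ / ‖a‖ := by
  have ha' : 0 < ‖a‖ := norm_pos_iff.2 ha
  have hb' : 0 < ‖b‖ := norm_pos_iff.2 hb
  have key : ‖a‖⁻¹ • a - ‖b‖⁻¹ • b
      = ‖a‖⁻¹ • ((a - b) + (‖b‖ - ‖a‖) • (‖b‖⁻¹ • b)) := by
    have : ‖a‖⁻¹ * ((‖b‖ - ‖a‖) * ‖b‖⁻¹) = ‖a‖⁻¹ - ‖b‖⁻¹ := by
      field_simp
    rw [smul_add, smul_sub, smul_smul (‖b‖ - ‖a‖), smul_smul ‖a‖⁻¹ (_ * _), this, sub_smul]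
    abel
  have h1 : ‖‖b‖⁻¹ • b‖ = 1 := norm_smul_inv_norm (𝕜 := ℝ) hb
  have h2 : |‖b‖ - ‖a‖| ≤ ‖a - b‖ := by
    rw [abs_sub_comm]; exact abs_norm_sub_norm_le a b
  rw [key, norm_smul, norm_inv, norm_norm, div_eq_inv_mul]
  gcongr
  refine (norm_add_le _ _).trans ?_
  rw [norm_smul, h1, Real.norm_eq_abs]
  linarith

/-- A closed ball centred in a set, of radius smaller than the distance to the frontier, stays
in the set. -/
theorem closedBall_subset_of_lt_infDist_frontier {B : Set H} {x : H} {δ : ℝ} (hδ : 0 ≤ δ)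
    (hx : x ∈ B) (h : δ < infDist x (frontier B)) : closedBall x δ ⊆ B := by
  have hc : IsPreconnected (closedBall x δ) := (convex_closedBall x δ).isPreconnected
  have hd : Disjoint (frontier B) (closedBall x δ) := by
    refine disjoint_left.2 fun y hy hyδ => ?_
    have := infDist_le_dist_of_mem (x := x) hy
    rw [mem_closedBall, dist_comm] at hyδ
    linarith
  have hsub : closedBall x δ ⊆ interior B ∪ interior Bᶜ := by
    intro y hy
    by_contra hcon
    rw [mem_union, not_or, interior_compl, mem_compl_iff, not_not] at hcon
    exact disjoint_left.1 hd ⟨hcon.2, hcon.1⟩ hy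
  have hxi : x ∈ interior B := by
    rcases hsub (mem_closedBall_self hδ) with h | h
    · exact h
    · exact absurd hx (interior_subset h)
  have hdisj : Disjoint (interior B) (interior Bᶜ) :=
    disjoint_left.2 fun y hy hy' => interior_subset hy' (interior_subset hy)
  exact (hc.subset_left_of_subset_union isOpen_interior isOpen_interior hdisj hsub
    ⟨x, mem_closedBall_self hδ, hxi⟩).trans interior_subset

variable [CompleteSpace H]

/-- The unit normal `∇g / |∇g|` to the level sets of `g`. -/
def unitNormal (g : H → ℝ) (x : H) : H := ‖gradient g x‖⁻¹ • gradient g x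

/-- The change of value from `g` at `x` to `g + p` at the point reached from `x` by moving a
signed distance `r` along the unit normal of `g` at `x`. -/
def normalDefect (g p : H → ℝ) (x : H) (r : ℝ) : ℝ :=
  g (x + r • unitNormal g x) - g x + p (x + r • unitNormal g x)

/-- Quantitative hypotheses: on the convex set `B` the perturbation `p` is small with respect to
the gradient and Hessian scales `A₁`, `A₂` of `g`, and `I ⊆ B` is a set of points
far from the boundary of `B`. -/
structure IsSmallPerturbation (B I : Set H) (g p : H → ℝ) (A₀ A₁ A₂ : ℝ) : Prop where
  A₀_pos : 0 < A₀
  A₁_pos : 0 < A₁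
  A₁_lt : A₁ < 1
  one_le_A₂ : 1 ≤ A₂
  small : 64 * (A₀ * A₂) ≤ A₁ ^ 2
  convex : Convex ℝ B
  ball_subset : ∀ x ∈ I, closedBall x (2 * A₀ / A₁) ⊆ B
  differentiable : Differentiable ℝ g
  gradient_lip : ∀ x ∈ B, ∀ y ∈ B, ‖gradient g x - gradient g y‖ ≤ A₂ * ‖x - y‖
  abs_p_le : ∀ x ∈ B, |p x| ≤ A₀
  differentiable_p : Differentiable ℝ p
  gradient_p_le : ∀ x ∈ B, ‖gradient p x‖ ≤ A₀
  eq_zero : ∀ x ∈ B, x ∉ I → p x = 0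

theorem norm_gradient (g : H → ℝ) (x : H) : ‖gradient g x‖ = ‖fderiv ℝ g x‖ :=
  LinearIsometryEquiv.norm_map _ _

theorem norm_unitNormal {g : H → ℝ} {x : H} (hx : gradient g x ≠ 0) : ‖unitNormal g x‖ = 1 :=
  norm_smul_inv_norm (𝕜 := ℝ) hx

theorem gradient_ne_zero_of_lt {g : H → ℝ} {x : H} {a : ℝ} (ha : 0 < a)
    (hx : a < ‖gradient g x‖) : gradient g x ≠ 0 :=
  norm_pos_iff.1 (ha.trans hx)

theorem hasDerivAt_comp_line {g : H → ℝ} (hg : Differentiable ℝ g) (x n : H) (t : ℝ) :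
    HasDerivAt (fun t : ℝ => g (x + t • n)) (inner ℝ (gradient g (x + t • n)) n) t := by
  have h1 : HasDerivAt (fun t : ℝ => x + t • n) n t := by
    simpa using ((hasDerivAt_id t).smul_const n).const_add x
  have h2 := (hg (x + t • n)).hasFDerivAt.comp_hasDerivAt t h1
  rwa [← inner_gradient_left] at h2

namespace IsSmallPerturbation

variable {B I : Set H} {g p : H → ℝ} {A₀ A₁ A₂ : ℝ}

theorem A₀_mul_A₂_div_le (h : IsSmallPerturbation B I g p A₀ A₁ A₂) :
    A₂ * (2 * A₀ / A₁) ≤ A₁ / 32 := by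
  have := h.A₁_pos
  have := h.small
  rw [← mul_div_assoc, div_le_iff₀ h.A₁_pos]
  nlinarith

theorem A₀_le (h : IsSmallPerturbation B I g p A₀ A₁ A₂) : A₀ ≤ A₁ / 64 := by
  have := h.A₁_pos
  have := h.small
  have := h.A₁_lt
  nlinarith [mul_le_mul_of_nonneg_left h.one_le_A₂ h.A₀_pos.le]

theorem lip (h : IsSmallPerturbation B I g p A₀ A₁ A₂) :
    ∀ x ∈ B, ∀ y ∈ B, |p x - p y| ≤ A₀ * ‖x - y‖ := fun _ hx _ hy =>
  h.convex.norm_image_sub_le_of_norm_fderiv_le (fun x _ => h.differentiable_p x)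
    (fun x hx => (norm_gradient p x).symm.trans_le (h.gradient_p_le x hx)) hy hx

theorem delta_pos (h : IsSmallPerturbation B I g p A₀ A₁ A₂) : 0 < 2 * A₀ / A₁ :=
  div_pos (mul_pos two_pos h.A₀_pos) h.A₁_pos

theorem line_mem (h : IsSmallPerturbation B I g p A₀ A₁ A₂) {x : H} (n : H) {r s t : ℝ}
    (hr : x + r • n ∈ B) (hs : x + s • n ∈ B) (ht : t ∈ uIcc r s) : x + t • n ∈ B := by
  have hc : Convex ℝ {t : ℝ | x + t • n ∈ B} := by
    intro a ha b hb u v hu hv huv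
    have := h.convex ha hb hu hv huv
    have e : u • (x + a • n) + v • (x + b • n) = x + (u • a + v • b) • n := by
      have : x = (u + v) • x := by rw [huv, one_smul]
      conv_rhs => rw [this]
      simp only [smul_add, add_smul, smul_smul, smul_eq_mul]
      abel
    rwa [e] at this
  exact hc.ordConnected.uIcc_subset hr hs ht

theorem normalDefect_sub_ge (h : IsSmallPerturbation B I g p A₀ A₁ A₂) {x : H} (hx : x ∈ B)
    (hgx : A₁ < ‖gradient g x‖) {r s : ℝ} (hrs : r ≤ s) (hr : |r| ≤ 2 * A₀ / A₁)
    (hs : |s| ≤ 2 * A₀ / A₁) (hrB : x + r • unitNormal g x ∈ B)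
    (hsB : x + s • unitNormal g x ∈ B) :
    A₁ / 2 * (s - r) ≤ normalDefect g p x s - normalDefect g p x r := by
  have h0 := gradient_ne_zero_of_lt h.A₁_pos hgx
  have hn := norm_unitNormal h0
  set n := unitNormal g x with hndef
  have hgrad : inner ℝ (gradient g x) n = ‖gradient g x‖ := by
    rw [hndef, unitNormal, inner_smul_right, real_inner_self_eq_norm_sq]
    field_simp
  have hder := hasDerivAt_comp_line h.differentiable x n
  have hmain : 3 / 4 * A₁ * (s - r) ≤ g (x + s • n) - g (x + r • n) := by
    refine (convex_Icc r s).mul_sub_le_image_sub_of_le_deriv (f := fun t : ℝ => g (x + t • n))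
      (fun t _ => (hder t).continuousAt.continuousWithinAt)
      (fun t _ => (hder t).differentiableAt.differentiableWithinAt) (fun t ht => ?_)
      r (left_mem_Icc.2 hrs) s (right_mem_Icc.2 hrs) hrs
    have ht' := interior_subset ht
    rw [(hder t).deriv]
    have htB := h.line_mem n hrB hsB (Icc_subset_uIcc ht')
    have habs : |t| ≤ 2 * A₀ / A₁ :=
      abs_le.2 ⟨(abs_le.1 hr).1.trans ht'.1, ht'.2.trans (abs_le.1 hs).2⟩
    have hl := h.gradient_lip _ htB _ hx
    rw [add_sub_cancel_left, norm_smul, hn, mul_one, Real.norm_eq_abs] at hl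
    have hin := abs_le.1 (abs_real_inner_le_norm (gradient g (x + t • n) - gradient g x) n)
    rw [hn, mul_one, inner_sub_left, hgrad] at hin
    have hA := mul_le_mul_of_nonneg_left habs (zero_le_one.trans h.one_le_A₂)
    have := h.A₀_mul_A₂_div_le
    have := h.A₁_pos
    linarith [hin.1]
  have hp := (abs_le.1 (h.lip _ hsB _ hrB)).1
  rw [add_sub_add_left_eq_sub, ← sub_smul, norm_smul, hn, mul_one, Real.norm_eq_abs,
    abs_of_nonneg (sub_nonneg.2 hrs)] at hp
  have := mul_le_mul_of_nonneg_right h.A₀_le (sub_nonneg.2 hrs)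
  have := mul_nonneg h.A₁_pos.le (sub_nonneg.2 hrs)
  simp only [normalDefect, ← hndef]
  nlinarith

theorem add_smul_mem (h : IsSmallPerturbation B I g p A₀ A₁ A₂) {x : H} (hx : x ∈ I)
    (hgx : A₁ < ‖gradient g x‖) {r : ℝ} (hr : |r| ≤ 2 * A₀ / A₁) :
    x + r • unitNormal g x ∈ B := by
  apply h.ball_subset x hx
  rw [mem_closedBall, dist_eq_norm, add_sub_cancel_left, norm_smul,
    norm_unitNormal (gradient_ne_zero_of_lt h.A₁_pos hgx), mul_one]
  exact hr

theorem continuous_normalDefect (h : IsSmallPerturbation B I g p A₀ A₁ A₂) (x : H) :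
    Continuous (normalDefect g p x) := by
  have := h.differentiable.continuous
  have := h.differentiable_p.continuous
  unfold normalDefect
  fun_prop

theorem exists_normalDefect_eq_zero (h : IsSmallPerturbation B I g p A₀ A₁ A₂)
    {x : H} (hx : x ∈ B) (hgx : A₁ < ‖gradient g x‖) :
    ∃ r : ℝ, |r| ≤ 2 * A₀ / A₁ ∧ (x ∉ I → r = 0) ∧ normalDefect g p x r = 0 := by
  by_cases hxI : x ∈ I
  · have hδ := h.delta_pos
    set δ := 2 * A₀ / A₁ with hδdef
    have hA : A₁ / 2 * δ = A₀ := by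
      have := h.A₁_pos.ne'
      rw [hδdef]; field_simp
    have hz : |(0 : ℝ)| ≤ δ := by simpa using hδ.le
    have hz' : |δ| ≤ δ := by rw [abs_of_pos hδ]
    have hz'' : |-δ| ≤ δ := by rw [abs_neg, abs_of_pos hδ]
    have hm := fun {r : ℝ} => h.add_smul_mem hxI hgx (r := r)
    have h1 := h.normalDefect_sub_ge hx hgx hδ.le hz hz' (hm hz) (hm hz')
    have h2 := h.normalDefect_sub_ge hx hgx (neg_nonpos.2 hδ.le) hz'' hz (hm hz'') (hm hz)
    have h3 : normalDefect g p x 0 = p x := by simp [normalDefect]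
    have h4 := abs_le.1 (h.abs_p_le x hx)
    rw [h3] at h1 h2
    obtain ⟨r, hr, hr0⟩ := intermediate_value_Icc (neg_le_self hδ.le)
      (h.continuous_normalDefect x).continuousOn
      (show (0 : ℝ) ∈ Icc (normalDefect g p x (-δ)) (normalDefect g p x δ) from
        ⟨by linarith, by linarith⟩)
    exact ⟨r, abs_le.2 hr, fun hxI' => absurd hxI hxI', hr0⟩
  · exact ⟨0, by simpa using h.delta_pos.le, fun _ => rfl, by
      simp [normalDefect, h.eq_zero x hx hxI]⟩

theorem norm_unitNormal_sub_le (h : IsSmallPerturbation B I g p A₀ A₁ A₂) {x y : H} (hx : x ∈ B)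
    (hy : y ∈ B) (hgx : A₁ < ‖gradient g x‖) (hgy : A₁ < ‖gradient g y‖) :
    ‖gradient g x‖ * ‖unitNormal g x - unitNormal g y‖ ≤ 2 * A₂ * ‖x - y‖ := by
  have hx0 := gradient_ne_zero_of_lt h.A₁_pos hgx
  have := norm_normalize_sub_le hx0 (gradient_ne_zero_of_lt h.A₁_pos hgy)
  rw [le_div_iff₀ (norm_pos_iff.2 hx0)] at this
  have := h.gradient_lip x hx y hy
  simp only [unitNormal]
  linarith

theorem abs_normalDefect_sub_le (h : IsSmallPerturbation B I g p A₀ A₁ A₂) {x y : H} (hx : x ∈ B)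
    (hy : y ∈ B) (hgx : A₁ < ‖gradient g x‖) (hgy : A₁ < ‖gradient g y‖) {r : ℝ}
    (hr : |r| ≤ 2 * A₀ / A₁) (hrx : x + r • unitNormal g x ∈ B)
    (hry : y + r • unitNormal g y ∈ B) :
    |normalDefect g p x r - normalDefect g p y r| ≤ 14 * (A₀ * A₂ / A₁) * ‖x - y‖ := by
  have hA1 := h.A₁_pos
  have hA2 := h.one_le_A₂
  have hny := norm_unitNormal (gradient_ne_zero_of_lt h.A₁_pos hgy)
  have hnx := norm_unitNormal (gradient_ne_zero_of_lt h.A₁_pos hgx)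
  have hD := h.norm_unitNormal_sub_le hx hy hgx hgy
  have hsmall := h.A₀_mul_A₂_div_le
  set n := unitNormal g x with hn
  set m := unitNormal g y with hm
  set D := ‖x - y‖ with hDdef
  have hD0 : 0 ≤ D := norm_nonneg _
  have hpt : ∀ t : ℝ, |t| ≤ 2 * A₀ / A₁ → ‖(x + t • n) - (y + t • m)‖ ≤ 2 * D := by
    intro t ht
    have e : (x + t • n) - (y + t • m) = (x - y) + t • (n - m) := by
      rw [smul_sub]; abel
    have h1 : |t| * ‖n - m‖ ≤ D := by
      have h2 : A₁ * ‖n - m‖ ≤ 2 * A₂ * D :=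
        (mul_le_mul_of_nonneg_right hgx.le (norm_nonneg _)).trans hD
      have h3 : A₁ * (|t| * ‖n - m‖) ≤ A₁ * D := by
        calc A₁ * (|t| * ‖n - m‖) = |t| * (A₁ * ‖n - m‖) := by ring
          _ ≤ (2 * A₀ / A₁) * (2 * A₂ * D) :=
            mul_le_mul ht h2 (by positivity) h.delta_pos.le
          _ = 2 * (A₂ * (2 * A₀ / A₁)) * D := by ring
          _ ≤ 2 * (A₁ / 32) * D := by gcongr
          _ ≤ A₁ * D := by nlinarith [mul_nonneg hA1.le hD0]
      exact le_of_mul_le_mul_left h3 hA1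
    rw [e]
    refine (norm_add_le _ _).trans ?_
    rw [norm_smul, Real.norm_eq_abs]
    linarith
  have hg : |(g (x + r • n) - g (y + r • m)) - (g x - g y)| ≤ 6 * A₂ * D * |r| := by
    have hder : ∀ t ∈ uIcc 0 r, HasDerivWithinAt
        (fun t : ℝ => g (x + t • n) - g (y + t • m))
        (inner ℝ (gradient g (x + t • n)) n - inner ℝ (gradient g (y + t • m)) m)
        (uIcc 0 r) t := fun t _ =>
      ((hasDerivAt_comp_line h.differentiable x n t).sub
        (hasDerivAt_comp_line h.differentiable y m t)).hasDerivWithinAt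
    have := (convex_uIcc (0 : ℝ) r).norm_image_sub_le_of_norm_hasDerivWithin_le
      (C := 6 * A₂ * D) hder (fun t ht => ?_) left_mem_uIcc right_mem_uIcc
    · simpa using this
    have htB := h.line_mem (x := x) n (by simpa using hx) hrx ht
    have htB' := h.line_mem (x := y) m (by simpa using hy) hry ht
    have htr : |t| ≤ 2 * A₀ / A₁ := by
      have : |t - 0| ≤ |r - 0| := abs_sub_left_of_mem_uIcc ht
      simpa using this.trans (by simpa using hr)
    have e : inner ℝ (gradient g (x + t • n)) n - inner ℝ (gradient g (y + t • m)) m =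
        inner ℝ (gradient g (x + t • n)) (n - m)
          + inner ℝ (gradient g (x + t • n) - gradient g (y + t • m)) m := by
      rw [inner_sub_right, inner_sub_left]; ring
    rw [e]
    have h1 : ‖gradient g (x + t • n)‖ ≤ 2 * ‖gradient g x‖ := by
      have := h.gradient_lip _ htB _ hx
      rw [add_sub_cancel_left, norm_smul, hnx, mul_one, Real.norm_eq_abs] at this
      have h2 := norm_le_norm_add_norm_sub' (gradient g (x + t • n)) (gradient g x)
      have h3 := mul_le_mul_of_nonneg_left htr (zero_le_one.trans hA2)
      linarith
    have h2 : |inner ℝ (gradient g (x + t • n)) (n - m)| ≤ 4 * A₂ * D := by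
      refine (abs_real_inner_le_norm _ _).trans ?_
      have := mul_le_mul_of_nonneg_right h1 (norm_nonneg (n - m))
      linarith
    have h3 : |inner ℝ (gradient g (x + t • n) - gradient g (y + t • m)) m| ≤ 2 * A₂ * D := by
      refine (abs_real_inner_le_norm _ _).trans ?_
      rw [hny, mul_one]
      refine (h.gradient_lip _ htB _ htB').trans ?_
      have := mul_le_mul_of_nonneg_left (hpt t htr) (zero_le_one.trans hA2)
      linarith
    exact (abs_add_le _ _).trans (by linarith)
  have hp : |p (x + r • n) - p (y + r • m)| ≤ A₀ * (2 * D) :=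
    (h.lip _ hrx _ hry).trans (mul_le_mul_of_nonneg_left (hpt r hr) h.A₀_pos.le)
  have e : normalDefect g p x r - normalDefect g p y r =
      ((g (x + r • n) - g (y + r • m)) - (g x - g y)) + (p (x + r • n) - p (y + r • m)) := by
    simp only [normalDefect, ← hn, ← hm]; ring
  rw [e]
  refine (abs_add_le _ _).trans ?_
  have h1 : 6 * A₂ * D * |r| ≤ 12 * (A₀ * A₂ / A₁) * D := by
    calc 6 * A₂ * D * |r| ≤ 6 * A₂ * D * (2 * A₀ / A₁) := by gcongr
      _ = _ := by ring
  have h2 : A₀ ≤ A₀ * A₂ / A₁ := by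
    rw [le_div_iff₀ hA1]
    exact mul_le_mul_of_nonneg_left (h.A₁_lt.le.trans hA2) h.A₀_pos.le
  have := mul_le_mul_of_nonneg_right h2 hD0
  linarith

/-- Zeros of the normal defect depend on the base point in a Lipschitz way. -/
theorem abs_sub_le_of_normalDefect_eq_zero (h : IsSmallPerturbation B I g p A₀ A₁ A₂) {x y : H}
    (hx : x ∈ B) (hy : y ∈ B) (hgx : A₁ < ‖gradient g x‖) (hgy : A₁ < ‖gradient g y‖) {r s : ℝ}
    (hr : |r| ≤ 2 * A₀ / A₁) (hs : |s| ≤ 2 * A₀ / A₁) (hrI : x ∉ I → r = 0) (hsI : y ∉ I → s = 0)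
    (hr0 : normalDefect g p x r = 0) (hs0 : normalDefect g p y s = 0) :
    |r - s| ≤ 28 * (A₀ * A₂ / A₁ ^ 2) * ‖x - y‖ := by
  wlog hle : |s| ≤ |r| generalizing x y r s
  · rw [abs_sub_comm, norm_sub_rev]
    exact this hy hx hgy hgx hs hr hsI hrI hs0 hr0 (not_le.1 hle).le
  have hA1 := h.A₁_pos
  have hA0 := h.A₀_pos
  have hA2 := zero_lt_one.trans_le h.one_le_A₂
  by_cases hxI : x ∈ I
  · have hrx := h.add_smul_mem hxI hgx hr
    have hsx := h.add_smul_mem hxI hgx hs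
    have hsy : y + s • unitNormal g y ∈ B := by
      by_cases hyI : y ∈ I
      · exact h.add_smul_mem hyI hgy hs
      · simpa [hsI hyI] using hy
    have h1 := h.abs_normalDefect_sub_le hx hy hgx hgy hs hsx hsy
    have h2 : A₁ / 2 * |r - s| ≤ |normalDefect g p x r - normalDefect g p x s| := by
      rcases le_total r s with hrs | hrs
      · have := h.normalDefect_sub_ge hx hgx hrs hr hs hrx hsx
        rw [abs_sub_comm, abs_of_nonneg (sub_nonneg.2 hrs), abs_sub_comm]
        exact this.trans (le_abs_self _)
      · have := h.normalDefect_sub_ge hx hgx hrs hs hr hsx hrx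
        rw [abs_of_nonneg (sub_nonneg.2 hrs)]
        exact this.trans (le_abs_self _)
    rw [hr0, zero_sub, abs_neg] at h2
    rw [hs0, sub_zero] at h1
    have h3 : A₁ / 2 * |r - s| ≤ A₁ / 2 * (28 * (A₀ * A₂ / A₁ ^ 2) * ‖x - y‖) := by
      refine (h2.trans h1).trans (le_of_eq ?_)
      field_simp
      ring
    exact le_of_mul_le_mul_left h3 (by positivity)
  · have hr' := hrI hxI
    rw [hr', abs_zero] at hle
    rw [hr', abs_nonpos_iff.1 hle, sub_self, abs_zero]
    positivity

theorem norm_displacement_sub_le (h : IsSmallPerturbation B I g p A₀ A₁ A₂) {x y : H}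
    (hx : x ∈ B) (hy : y ∈ B) (hgx : A₁ < ‖gradient g x‖) (hgy : A₁ < ‖gradient g y‖) {r s : ℝ}
    (hr : |r| ≤ 2 * A₀ / A₁) (hs : |s| ≤ 2 * A₀ / A₁) (hrI : x ∉ I → r = 0) (hsI : y ∉ I → s = 0)
    (hr0 : normalDefect g p x r = 0) (hs0 : normalDefect g p y s = 0) :
    ‖r • unitNormal g x - s • unitNormal g y‖ ≤ 32 * (A₀ * A₂ / A₁ ^ 2) * ‖x - y‖ := by
  have h1 := h.abs_sub_le_of_normalDefect_eq_zero hx hy hgx hgy hr hs hrI hsI hr0 hs0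
  have hnx := norm_unitNormal (gradient_ne_zero_of_lt h.A₁_pos hgx)
  have hD := h.norm_unitNormal_sub_le hx hy hgx hgy
  have hA1 := h.A₁_pos
  have e : r • unitNormal g x - s • unitNormal g y =
      (r - s) • unitNormal g x + s • (unitNormal g x - unitNormal g y) := by
    rw [sub_smul, smul_sub]; abel
  rw [e]
  refine (norm_add_le _ _).trans ?_
  rw [norm_smul, norm_smul, hnx, mul_one, Real.norm_eq_abs, Real.norm_eq_abs]
  have h2 : ‖unitNormal g x - unitNormal g y‖ ≤ 2 * A₂ * ‖x - y‖ / A₁ := by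
    rw [le_div_iff₀ hA1, mul_comm]
    exact (mul_le_mul_of_nonneg_right hgx.le (norm_nonneg _)).trans hD
  have h3 : |s| * ‖unitNormal g x - unitNormal g y‖ ≤ 4 * (A₀ * A₂ / A₁ ^ 2) * ‖x - y‖ := by
    calc _ ≤ (2 * A₀ / A₁) * (2 * A₂ * ‖x - y‖ / A₁) :=
          mul_le_mul hs h2 (norm_nonneg _) h.delta_pos.le
      _ = _ := by field_simp; ring
  linarith


theorem normalDefect_deriv_pos (h : IsSmallPerturbation B I g p A₀ A₁ A₂) {x : H} (hx : x ∈ B)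
    (hgx : A₁ < ‖gradient g x‖) {r : ℝ} (hr : |r| ≤ 2 * A₀ / A₁)
    (hrB : x + r • unitNormal g x ∈ B) :
    ∃ a : ℝ, 0 < a ∧ HasDerivAt (normalDefect g p x) a r := by
  have h0 := gradient_ne_zero_of_lt h.A₁_pos hgx
  have hn := norm_unitNormal h0
  have hd := ((hasDerivAt_comp_line h.differentiable x (unitNormal g x) r).sub_const (g x)).add
    (hasDerivAt_comp_line h.differentiable_p x (unitNormal g x) r)
  refine ⟨_, ?_, hd⟩
  set n := unitNormal g x with hndef
  have hgrad : inner ℝ (gradient g x) n = ‖gradient g x‖ := by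
    rw [hndef, unitNormal, inner_smul_right, real_inner_self_eq_norm_sq]
    field_simp
  have hl := h.gradient_lip _ hrB _ hx
  rw [add_sub_cancel_left, norm_smul, hn, mul_one, Real.norm_eq_abs] at hl
  have hin := abs_le.1 (abs_real_inner_le_norm (gradient g (x + r • n) - gradient g x) n)
  rw [hn, mul_one, inner_sub_left, hgrad] at hin
  have hip := abs_le.1 (abs_real_inner_le_norm (gradient p (x + r • n)) n)
  rw [hn, mul_one] at hip
  have hA := mul_le_mul_of_nonneg_left hr (zero_le_one.trans h.one_le_A₂)
  have := h.A₀_mul_A₂_div_le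
  have := h.A₁_pos
  have := h.A₀_le
  have := h.gradient_p_le _ hrB
  linarith [hin.1, hip.1]

end IsSmallPerturbation

theorem contDiff_gradient {g : H → ℝ} (hg : ContDiff ℝ 2 g) : ContDiff ℝ 1 (gradient g) := by
  let T : StrongDual ℝ H →L[ℝ] H :=
    AddMonoidHom.toRealLinearMap ((InnerProductSpace.toDual ℝ H).symm : StrongDual ℝ H →+ H)
      (InnerProductSpace.toDual ℝ H).symm.continuous
  exact T.contDiff.comp (hg.fderiv_right (m := 1) (by norm_num))

theorem contDiffAt_unitNormal {g : H → ℝ} (hg : ContDiff ℝ 2 g) {x : H} (hx : gradient g x ≠ 0) :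
    ContDiffAt ℝ 1 (unitNormal g) x := by
  have h := (contDiff_gradient hg).contDiffAt (x := x)
  exact ((h.norm ℝ hx).inv (norm_ne_zero_iff.2 hx)).smul h

/-- A continuous solution of a nondegenerate scalar `C¹` equation is `C¹`. -/
theorem contDiffWithinAt_of_implicit {f : H × ℝ → ℝ} {ρ : H → ℝ} {V : Set H} {x : H} {a : ℝ}
    (hf : ContDiffAt ℝ 1 f (x, ρ x)) (ha : a ≠ 0) (hd : HasDerivAt (fun r => f (x, r)) a (ρ x))
    (hρ : ContinuousWithinAt ρ V x) (hx : x ∈ V) (hzero : ∀ y ∈ V, f (y, ρ y) = 0) :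
    ContDiffWithinAt ℝ 1 ρ V x := by
  have hinv : (fderiv ℝ f (x, ρ x) ∘L .inr ℝ H ℝ).IsInvertible := by
    have h1 : HasDerivAt (fun r => f (x, r)) (fderiv ℝ f (x, ρ x) (0, 1)) (ρ x) :=
      (hf.differentiableAt one_ne_zero).hasFDerivAt.comp_hasDerivAt (ρ x)
        ((hasDerivAt_const (ρ x) x).prodMk (hasDerivAt_id (ρ x)))
    refine ⟨ContinuousLinearEquiv.unitsEquivAut ℝ (Units.mk0 a ha), ?_⟩
    ext
    simp [hd.unique h1]
  refine (hf.contDiffAt_implicitFunction one_ne_zero hinv).contDiffWithinAt.congr_of_eventuallyEq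
    ?_ (hf.implicitFunction_apply_self one_ne_zero hinv).symm
  have ht : Tendsto (fun y => (y, ρ y)) (𝓝[V] x) (𝓝 (x, ρ x)) :=
    (continuousWithinAt_id.tendsto).prodMk_nhds hρ
  filter_upwards [ht.eventually (hf.eventually_apply_eq_iff_implicitFunction one_ne_zero hinv),
    self_mem_nhdsWithin] with y hy hyV
  exact (hy.1 ((hzero y hyV).trans (hzero x hx).symm)).symm

theorem IsSmallPerturbation.exists_normal_projection {B I : Set H} {g p : H → ℝ} {A₀ A₁ A₂ : ℝ}
    (h : IsSmallPerturbation B I g p A₀ A₁ A₂) (hg : ContDiff ℝ 2 g) (hp : ContDiff ℝ 2 p)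
    {V : Set H} (hVB : V ⊆ B) (hV : ∀ x ∈ V, A₁ < ‖gradient g x‖) :
    ∃ φ : H → H, ContDiffOn ℝ 1 φ V ∧ MapsTo φ V B ∧
      (∀ x ∈ V, ∃ r : ℝ, |r| ≤ 2 * A₀ / A₁ ∧ φ x = x + r • unitNormal g x ∧
        g (φ x) + p (φ x) = g x) ∧
      ∀ x ∈ V, ∀ y ∈ V, ‖(φ x - φ y) - (x - y)‖ ≤ 32 * (A₀ * A₂ / A₁ ^ 2) * ‖x - y‖ := by
  have hex : ∀ x, ∃ r : ℝ, x ∈ V → |r| ≤ 2 * A₀ / A₁ ∧ (x ∉ I → r = 0) ∧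
      normalDefect g p x r = 0 := by
    intro x
    by_cases hx : x ∈ V
    · obtain ⟨r, hr⟩ := h.exists_normalDefect_eq_zero (hVB hx) (hV x hx)
      exact ⟨r, fun _ => hr⟩
    · exact ⟨0, fun hx' => absurd hx' hx⟩
  choose ρ hρ using hex
  have hmem : ∀ x ∈ V, x + ρ x • unitNormal g x ∈ B := by
    intro x hx
    by_cases hxI : x ∈ I
    · exact h.add_smul_mem hxI (hV x hx) (hρ x hx).1
    · simpa [(hρ x hx).2.1 hxI] using hVB hx
  have hcont : ContinuousOn ρ V := by
    have hL : LipschitzOnWith (28 * (A₀ * A₂ / A₁ ^ 2)).toNNReal ρ V := by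
      refine LipschitzOnWith.of_dist_le' fun x hx y hy => ?_
      rw [Real.dist_eq, dist_eq_norm]
      exact h.abs_sub_le_of_normalDefect_eq_zero (hVB hx) (hVB hy) (hV x hx) (hV y hy)
        (hρ x hx).1 (hρ y hy).1 (hρ x hx).2.1 (hρ y hy).2.1 (hρ x hx).2.2 (hρ y hy).2.2
    exact hL.continuousOn
  refine ⟨fun x => x + ρ x • unitNormal g x, fun x hx => ?_, hmem, fun x hx => ?_,
    fun x hx y hy => ?_⟩
  · have hn := contDiffAt_unitNormal hg (gradient_ne_zero_of_lt h.A₁_pos (hV x hx))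
    obtain ⟨a, ha, hd⟩ := h.normalDefect_deriv_pos (hVB hx) (hV x hx) (hρ x hx).1 (hmem x hx)
    have hf : ContDiffAt ℝ 1 (fun v : H × ℝ => normalDefect g p v.1 v.2) (x, ρ x) := by
      have hg1 : ContDiff ℝ 1 g := hg.of_le (by norm_num)
      have hp1 : ContDiff ℝ 1 p := hp.of_le (by norm_num)
      have hn' : ContDiffAt ℝ 1 (fun v : H × ℝ => unitNormal g v.1) (x, ρ x) :=
        ContDiffAt.comp (x, ρ x) (f := Prod.fst) hn contDiffAt_fst
      have hs : ContDiffAt ℝ 1 (fun v : H × ℝ => v.1 + v.2 • unitNormal g v.1) (x, ρ x) :=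
        contDiffAt_fst.add (contDiffAt_snd.smul hn')
      exact ((hg1.contDiffAt.comp _ hs).sub (hg1.contDiffAt.comp _ contDiffAt_fst)).add
        (hp1.contDiffAt.comp _ hs)
    have := contDiffWithinAt_of_implicit hf ha.ne' hd (hcont x hx) hx
      (fun y hy => (hρ y hy).2.2)
    exact contDiffWithinAt_id.add (this.smul hn.contDiffWithinAt)
  · refine ⟨ρ x, (hρ x hx).1, rfl, ?_⟩
    have := (hρ x hx).2.2
    simp only [normalDefect] at this
    linarith
  · have e : (x + ρ x • unitNormal g x) - (y + ρ y • unitNormal g y) - (x - y) =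
        ρ x • unitNormal g x - ρ y • unitNormal g y := by abel
    rw [e]
    exact h.norm_displacement_sub_le (hVB hx) (hVB hy) (hV x hx) (hV y hy)
      (hρ x hx).1 (hρ y hy).1 (hρ x hx).2.1 (hρ y hy).2.1 (hρ x hx).2.2 (hρ y hy).2.2

theorem one_add_pow_le_of_le_one {t : ℝ} (ht : 0 ≤ t) (ht1 : t ≤ 1) (m : ℕ) :
    (1 + t) ^ m ≤ 1 + t * (2 ^ m - 1) := by
  induction m with
  | zero => simp
  | succ m ih =>
    have h2 : (1 : ℝ) ≤ 2 ^ m := one_le_pow₀ one_le_two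
    have := mul_le_mul_of_nonneg_right ih (by linarith : 0 ≤ 1 + t)
    have h3 : t * (t * (2 ^ m - 1)) ≤ t * (1 * (2 ^ m - 1)) := by gcongr
    rw [pow_succ, pow_succ]
    linarith

/-- A map that is close to an isometry at the Lipschitz level almost preserves Hausdorff
measures. -/
theorem abs_toReal_hausdorffMeasure_image_sub_le {E : Type*} [NormedAddCommGroup E]
    [MeasurableSpace E] [BorelSpace E] {φ : E → E} {S : Set E} {t : ℝ} (ht : 0 ≤ t)
    (ht1 : t ≤ 1 / 2) (hφ : ∀ x ∈ S, ∀ y ∈ S, ‖(φ x - φ y) - (x - y)‖ ≤ t * ‖x - y‖) (m : ℕ) :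
    |(μH[(m : ℝ)] (φ '' S)).toReal - (μH[(m : ℝ)] S).toReal| ≤
      2 * 4 ^ m * t * (μH[(m : ℝ)] S).toReal := by
  have hL1 : LipschitzOnWith (1 + 2 * t).toNNReal φ S := by
    refine LipschitzOnWith.of_dist_le' fun x hx y hy => ?_
    rw [dist_eq_norm, dist_eq_norm]
    have h1 := norm_le_norm_add_norm_sub' (φ x - φ y) (x - y)
    have h2 := hφ x hx y hy
    have := mul_nonneg ht (norm_nonneg (x - y))
    linarith
  have hlow : ∀ x ∈ S, ∀ y ∈ S, ‖x - y‖ ≤ (1 + 2 * t) * ‖φ x - φ y‖ := by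
    intro x hx y hy
    have h1 := norm_le_norm_add_norm_sub (φ x - φ y) (x - y)
    have h2 := hφ x hx y hy
    have h3 : (1 - t) * ‖x - y‖ ≤ ‖φ x - φ y‖ := by linarith
    have h4 := mul_le_mul_of_nonneg_left h3 (by linarith : 0 ≤ 1 + 2 * t)
    have h5 : 1 ≤ (1 + 2 * t) * (1 - t) := by nlinarith
    have h6 := mul_le_mul_of_nonneg_right h5 (norm_nonneg (x - y))
    linarith
  have hinj : InjOn φ S := by
    intro x hx y hy hxy
    have := hlow x hx y hy
    rw [hxy, sub_self, norm_zero, mul_zero] at this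
    exact sub_eq_zero.1 (norm_le_zero_iff.1 this)
  have hL2 : LipschitzOnWith (1 + 2 * t).toNNReal (Function.invFunOn φ S) (φ '' S) := by
    refine LipschitzOnWith.of_dist_le' ?_
    rintro _ ⟨x, hx, rfl⟩ _ ⟨y, hy, rfl⟩
    rw [hinj.leftInvOn_invFunOn hx, hinj.leftInvOn_invFunOn hy, dist_eq_norm, dist_eq_norm]
    exact hlow x hx y hy
  have hm : (0 : ℝ) ≤ m := m.cast_nonneg
  have hb := hL1.hausdorffMeasure_image_le hm
  have ha := hL2.hausdorffMeasure_image_le hm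
  rw [hinj.leftInvOn_invFunOn.image_image] at ha
  rw [ENNReal.rpow_natCast] at ha hb
  set a := μH[(m : ℝ)] S
  set b := μH[(m : ℝ)] (φ '' S)
  have hK : ((1 + 2 * t).toNNReal : ℝ≥0∞) ^ m ≠ ∞ := ENNReal.pow_ne_top ENNReal.coe_ne_top
  by_cases hat : a = ∞
  · have hbt : b = ∞ := by
      by_contra hbt
      exact (ha.trans_lt (ENNReal.mul_lt_top hK.lt_top (lt_top_iff_ne_top.2 hbt))).ne hat
    simp [hat, hbt]
  have hbt : b ≠ ∞ := (hb.trans_lt (ENNReal.mul_lt_top hK.lt_top (lt_top_iff_ne_top.2 hat))).ne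
  have hb' := ENNReal.toReal_mono (ENNReal.mul_ne_top hK hat) hb
  have ha' := ENNReal.toReal_mono (ENNReal.mul_ne_top hK hbt) ha
  simp only [ENNReal.toReal_mul, ENNReal.toReal_pow, ENNReal.coe_toReal,
    Real.coe_toNNReal (1 + 2 * t) (by linarith)] at ha' hb'
  have hpow := one_add_pow_le_of_le_one (by linarith : 0 ≤ 2 * t) (by linarith) m
  have h2m : (1 : ℝ) ≤ 2 ^ m := one_le_pow₀ one_le_two
  have h4m : (4 : ℝ) ^ m = 2 ^ m * 2 ^ m := by rw [← mul_pow]; norm_num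
  set α := a.toReal
  set β := b.toReal
  have hα : 0 ≤ α := ENNReal.toReal_nonneg
  have hβ : 0 ≤ β := ENNReal.toReal_nonneg
  have hq : 0 ≤ 2 * t * 2 ^ m := by positivity
  have hL : (1 + 2 * t) ^ m ≤ 1 + 2 * t * 2 ^ m := by linarith
  have hL' : (1 + 2 * t) ^ m ≤ 2 ^ m := by gcongr; linarith
  have h1 := mul_le_mul_of_nonneg_right hL hα
  have h2 := mul_le_mul_of_nonneg_right hL hβ
  have h3 := mul_le_mul_of_nonneg_right hL' hα
  have h4 := mul_le_mul_of_nonneg_left (hb'.trans h3) hq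
  have h5 : 2 * t * 2 ^ m * α ≤ 2 * t * 2 ^ m * (2 ^ m * α) := by
    gcongr
    exact le_mul_of_one_le_left hα h2m
  rw [h4m, abs_le]
  constructor <;> linarith

end NormalProjection

theorem convex_unitCube (d : ℕ) (w : Fin d → ℤ) : Convex ℝ (unitCube d w) := by
  intro x hx y hy a b ha hb hab i
  exact convex_Icc (w i : ℝ) (w i + 1) (hx i) (hy i) ha hb hab

theorem isSmallPerturbation_unitCube {d : ℕ} {w : Fin d → ℤ} {g p : Euc d → ℝ}
    (hg : ContDiff ℝ 2 g) (hp : ContDiff ℝ 2 p) {A₀ A₁ A₂ : ℝ} (hA₁ : 0 < A₁) (hA₁' : A₁ < 1)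
    (hA₂ : 1 ≤ A₂) (hA₀ : 0 < A₀) (hsmall : A₀ < A₁ ^ 2 / (64 * A₂))
    (hH : ∀ x ∈ unitCube d w, ‖fderiv ℝ (fderiv ℝ g) x‖ < A₂)
    (hP : ∀ x ∈ unitCube d w, max |p x| ‖gradient p x‖ < A₀)
    (hP0 : ∀ x ∈ unitCube d w,
      Metric.infDist x (frontier (unitCube d w)) ≤ 2 * A₀ / A₁ → p x = 0) :
    IsSmallPerturbation (unitCube d w)
      {x ∈ unitCube d w | 2 * A₀ / A₁ < infDist x (frontier (unitCube d w))} g p A₀ A₁ A₂ where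
  A₀_pos := hA₀
  A₁_pos := hA₁
  A₁_lt := hA₁'
  one_le_A₂ := hA₂
  small := by
    rw [lt_div_iff₀ (by positivity)] at hsmall
    linarith
  convex := convex_unitCube d w
  ball_subset x hx := closedBall_subset_of_lt_infDist_frontier (by positivity) hx.1 hx.2
  differentiable := hg.differentiable (by norm_num)
  gradient_lip x hx y hy := by
    have hd : ContDiff ℝ 1 (fderiv ℝ g) := hg.fderiv_right (by norm_num)
    have := (convex_unitCube d w).norm_image_sub_le_of_norm_fderiv_le
      (fun z _ => hd.differentiable (by norm_num) z) (fun z hz => (hH z hz).le) hy hx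
    unfold gradient
    rwa [← map_sub, LinearIsometryEquiv.norm_map]
  abs_p_le x hx := (le_max_left _ _).trans (hP x hx).le
  differentiable_p := hp.differentiable (by norm_num)
  gradient_p_le x hx := (le_max_right _ _).trans (hP x hx).le
  eq_zero x hx hxI := hP0 x hx (not_lt.1 fun hlt => hxI ⟨hx, hlt⟩)

/-- The normal projection `φ` of Statement 7 distorts the
`(d−1)`-dimensional Hausdorff measure of pieces of the level set `{g = ℓ}` lying well
inside `B` by a factor of at most `1 ± C′_d·A₀A₂/A₁²`. -/
theorem statement_8 (d : ℕ) (hd : 1 ≤ d) :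
    ∃ C C' : ℝ, 20 ≤ C ∧ 0 < C' ∧
      ∀ (w : Fin d → ℤ) (ℓ : ℝ) (g p : Euc d → ℝ),
        ContDiff ℝ 2 g → ContDiff ℝ 2 p →
        ∀ (A₀ A₁ A₂ : ℝ),
          0 < A₁ → A₁ < 1 → 1 ≤ A₂ → 0 < A₀ → A₀ < A₁ ^ 2 / (C * A₂) →
          (∀ x ∈ unitCube d w, g x = ℓ → A₁ < ‖gradient g x‖) →
          (∀ x ∈ unitCube d w, ‖fderiv ℝ (fderiv ℝ g) x‖ < A₂) →
          (∀ x ∈ unitCube d w, max |p x| ‖gradient p x‖ < A₀) →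
          (∀ x ∈ unitCube d w,
            Metric.infDist x (frontier (unitCube d w)) ≤ 2 * A₀ / A₁ → p x = 0) →
          ∃ (V : Set (Euc d)) (φ : Euc d → Euc d),
            (∃ U : Set (Euc d), IsOpen U ∧ V = U ∩ unitCube d w) ∧
            {x | g x = ℓ} ∩ unitCube d w ⊆ V ∧
            Set.InjOn φ V ∧
            ContDiffOn ℝ 1 φ V ∧
            Set.MapsTo φ V (unitCube d w) ∧
            (∀ x ∈ V, ∃ r : ℝ, |r| ≤ 2 * A₀ / A₁ ∧
              φ x = x + r • (‖gradient g x‖⁻¹ • gradient g x) ∧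
              g (φ x) + p (φ x) = g x) ∧
            ∀ E : Set (Euc d), IsOpen E → E ⊆ unitCube d w →
              Metric.diam E ≤ A₁ / (3 * A₂) →
              (∀ x ∈ E, 2 * A₀ / A₁ ≤ Metric.infDist x (frontier (unitCube d w))) →
              |(μH[(d:ℝ) - 1] (φ '' ({x | g x = ℓ} ∩ E))).toReal -
                (μH[(d:ℝ) - 1] ({x | g x = ℓ} ∩ E)).toReal| ≤
                C' * (A₀ * A₂ / A₁ ^ 2) * (μH[(d:ℝ) - 1] ({x | g x = ℓ} ∩ E)).toReal := by
  refine ⟨64, 64 * 4 ^ d, by norm_num, by positivity, ?_⟩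
  intro w ℓ g p hg hp A₀ A₁ A₂ hA₁ hA₁' hA₂ hA₀ hsmall hG hH hP hP0
  have h := isSmallPerturbation_unitCube hg hp hA₁ hA₁' hA₂ hA₀ hsmall hH hP hP0
  have hopen : IsOpen {x | A₁ < ‖gradient g x‖} :=
    isOpen_lt continuous_const (contDiff_gradient hg).continuous.norm
  obtain ⟨φ, hφ, hφB, hφr, hφL⟩ := h.exists_normal_projection hg hp
    (V := {x | A₁ < ‖gradient g x‖} ∩ unitCube d w) inter_subset_right (fun x hx => hx.1)
  have ht1 : 32 * (A₀ * A₂ / A₁ ^ 2) ≤ 1 / 2 := by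
    have : A₀ * A₂ / A₁ ^ 2 ≤ 1 / 64 := by
      rw [div_le_iff₀ (by positivity)]
      linarith [h.small]
    linarith
  refine ⟨_, φ, ⟨_, hopen, rfl⟩, fun x hx => ⟨hG x hx.2 hx.1, hx.2⟩, fun x hx y hy hxy => ?_,
    hφ, hφB, hφr, fun E _ hEB _ _ => ?_⟩
  · have := hφL x hx y hy
    rw [hxy, sub_self, zero_sub, norm_neg] at this
    have := mul_le_mul_of_nonneg_right ht1 (norm_nonneg (x - y))
    exact sub_eq_zero.1 (norm_le_zero_iff.1 (by linarith))
  · have hS : {x | g x = ℓ} ∩ E ⊆ {x | A₁ < ‖gradient g x‖} ∩ unitCube d w :=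
      fun x hx => ⟨hG x (hEB hx.2) hx.1, hEB hx.2⟩
    have hmain := abs_toReal_hausdorffMeasure_image_sub_le (by positivity) ht1
      (fun x hx y hy => hφL x (hS hx) y (hS hy)) (d - 1)
    rw [Nat.cast_pred hd] at hmain
    refine hmain.trans (mul_le_mul_of_nonneg_right ?_ ENNReal.toReal_nonneg)
    have h4 : (4 : ℝ) ^ (d - 1) ≤ 4 ^ d := pow_le_pow_right₀ (by norm_num) (Nat.sub_le d 1)
    have hε : 0 ≤ A₀ * A₂ / A₁ ^ 2 := by positivity
    have := mul_le_mul_of_nonneg_right h4 hε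
    linarith

end
end
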